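/- Let Q be a hereditary graph class with Q̂ nonempty, and let r ≥ 1 be a natural number such that for every W ∈ Q̂ the randomness support graphon 1_{rand(W)} is K_{r+1}-free, while there exists W₀ ∈ Q̂ such that 1_{rand(W₀)} is not K_r-free. Then sup_{W∈Q̂} Ent(W) = 1 - 1/r; moreover there exists s ∈ {0,…,r} with W^{(r,s)} ∈ Q̂, and W^{(t,u)} ∉ Q̂ whenever t > r and 0 ≤ u ≤ t. -/

import Mathlib

open MeasureTheory Set Filter

noncomputable section

/-- A graphon: a symmetric measurable function `ℝ → ℝ → ℝ` with values in `[0,1]`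
(only its values on `[0,1]²` matter). -/
def IsGraphon (W : ℝ → ℝ → ℝ) : Prop :=
  (∀ x y, W x y = W y x) ∧ Measurable (Function.uncurry W) ∧
    ∀ x y, W x y ∈ Set.Icc (0 : ℝ) 1

/-- The cut norm `‖U‖_□`, the supremum over measurable `S, T ⊆ [0,1]` of
`|∫_{S×T} U|`. -/
def cutNorm (U : ℝ → ℝ → ℝ) : ℝ :=
  sSup { r : ℝ | ∃ S T : Set ℝ, MeasurableSet S ∧ MeasurableSet T ∧
    S ⊆ Set.Icc 0 1 ∧ T ⊆ Set.Icc 0 1 ∧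
    r = |∫ p in S ×ˢ T, U p.1 p.2| }

/-- `d_□(W₁, W₂) = ‖W₁ - W₂‖_□`. -/
def dCut (W₁ W₂ : ℝ → ℝ → ℝ) : ℝ := cutNorm (fun x y => W₁ x y - W₂ x y)

/-- A Lebesgue-measure-preserving map `[0,1] → [0,1]`. -/
def IsMPSelf (σ : ℝ → ℝ) : Prop :=
  MeasureTheory.MeasurePreserving σ
      (MeasureTheory.volume.restrict (Set.Icc (0:ℝ) 1))
      (MeasureTheory.volume.restrict (Set.Icc (0:ℝ) 1)) ∧
    Set.MapsTo σ (Set.Icc (0:ℝ) 1) (Set.Icc (0:ℝ) 1)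

/-- The cut distance `δ_□(W₁, W₂)`. -/
def deltaCut (W₁ W₂ : ℝ → ℝ → ℝ) : ℝ :=
  sInf { r : ℝ | ∃ σ₁ σ₂ : ℝ → ℝ, IsMPSelf σ₁ ∧ IsMPSelf σ₂ ∧
    r = cutNorm (fun x y => W₁ (σ₁ x) (σ₁ y) - W₂ (σ₂ x) (σ₂ y)) }

/-- The binary entropy function `h` (base-2 logarithm; `logb 2 0 = 0` by convention,
so `h 0 = h 1 = 0`). -/
def binEnt (x : ℝ) : ℝ := -x * Real.logb 2 x - (1 - x) * Real.logb 2 (1 - x)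

/-- `h̃ x = h (min x (1/2))`. -/
def htilde (x : ℝ) : ℝ := binEnt (min x (1/2))

/-- The entropy `Ent(W) = ∫₀¹∫₀¹ h(W(x,y)) dx dy` of a graphon. -/
def graphonEnt (W : ℝ → ℝ → ℝ) : ℝ :=
  ∫ x in Set.Icc (0:ℝ) 1, ∫ y in Set.Icc (0:ℝ) 1, binEnt (W x y)

open Classical in
/-- The graphon `W_G` of a simple graph `G` on `{1, …, n}` (vertices as `Fin n`,
vertex `i : Fin n` representing `i+1`): `W_G x y = 1` iff `⌈nx⌉⌈ny⌉ ∈ E(G)`. -/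
def graphonOfGraph {n : ℕ} (G : SimpleGraph (Fin n)) : ℝ → ℝ → ℝ := fun x y =>
  if ∃ i j : Fin n, G.Adj i j ∧ ⌈(n : ℝ) * x⌉ = ((i : ℕ) : ℤ) + 1 ∧
      ⌈(n : ℝ) * y⌉ = ((j : ℕ) : ℤ) + 1
  then 1 else 0

/-- A labelled graph class: a set of graphs on `{1,…,n}` for each `n`. -/
abbrev GraphClass := ∀ n : ℕ, Set (SimpleGraph (Fin n))

/-- A graph class is closed under relabelling by permutations. -/
def IsGraphClass (Q : GraphClass) : Prop :=
  ∀ (n : ℕ) (π : Equiv.Perm (Fin n)) (G : SimpleGraph (Fin n)),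
    G ∈ Q n → G.comap ⇑π ∈ Q n

/-- A hereditary graph class: a graph class closed under taking induced subgraphs
(relabelled by the order-preserving bijection). -/
def IsHereditary (Q : GraphClass) : Prop :=
  IsGraphClass Q ∧
    ∀ (m n : ℕ) (f : Fin m → Fin n), StrictMono f →
      ∀ G ∈ Q n, G.comap f ∈ Q m

/-- `Q̂`: the set of graphons which are limits (in cut distance) of sequences of graphs in
the class `Q` whose orders tend to infinity. -/
def limitSet (Q : GraphClass) : Set (ℝ → ℝ → ℝ) :=
  { W | IsGraphon W ∧
    ∃ (nk : ℕ → ℕ) (Gk : ∀ k, SimpleGraph (Fin (nk k))),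
      (∀ k, Gk k ∈ Q (nk k)) ∧ Filter.Tendsto nk Filter.atTop Filter.atTop ∧
      Filter.Tendsto (fun k => deltaCut (graphonOfGraph (Gk k)) W) Filter.atTop (nhds 0) }

/-- `C(n,2) = n(n-1)/2` as a real number. -/
def choose2 (n : ℕ) : ℝ := (n : ℝ) * ((n : ℝ) - 1) / 2

open Classical in
/-- The step function `E[W | P]` obtained by averaging `W` over the products of the
parts of the partition `P` of `[0,1]`. -/
def condExpPart {k : ℕ} (P : Fin k → Set ℝ) (W : ℝ → ℝ → ℝ) : ℝ → ℝ → ℝ := fun x y =>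
  ∑ i : Fin k, ∑ j : Fin k,
    if x ∈ P i ∧ y ∈ P j then ⨍ p in (P i) ×ˢ (P j), W p.1 p.2 else 0

/-- `W̄_n`: the step function of `W` for the partition of `[0,1]` into `n` consecutive
intervals of length `1/n`. -/
def barStep (n : ℕ) (W : ℝ → ℝ → ℝ) : ℝ → ℝ → ℝ :=
  condExpPart (fun i : Fin n => Set.Ioc (((i : ℕ) : ℝ)/n) ((((i : ℕ) : ℝ) + 1)/n)) W

/-- `N̂_□(n, δ; W)`: the number of graphs `G` on `{1,…,n}` with `d_□(W_G, W) ≤ δ`. -/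
def NhatCut (n : ℕ) (δ : ℝ) (W : ℝ → ℝ → ℝ) : ℕ :=
  Nat.card {G : SimpleGraph (Fin n) // dCut (graphonOfGraph G) W ≤ δ}

/-- `N_□(n, δ; W)`: the number of graphs `G` on `{1,…,n}` with `δ_□(W_G, W) ≤ δ`. -/
def NCut (n : ℕ) (δ : ℝ) (W : ℝ → ℝ → ℝ) : ℕ :=
  Nat.card {G : SimpleGraph (Fin n) // deltaCut (graphonOfGraph G) W ≤ δ}

open Classical in
/-- The induced density `p(F; W)` of a graph `F` on `{1,…,k}` in a graphon `W`. -/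
def inducedDensity {k : ℕ} (F : SimpleGraph (Fin k)) (W : ℝ → ℝ → ℝ) : ℝ :=
  ∫ x : Fin k → ℝ in Set.univ.pi (fun _ : Fin k => Set.Icc (0:ℝ) 1),
    ∏ i : Fin k, ∏ j : Fin k,
      if i < j then (if F.Adj i j then W (x i) (x j) else 1 - W (x i) (x j)) else 1

open Classical in
/-- The randomness support graphon `1_{rand(W)}` of `W`. -/
def randIndicator (W : ℝ → ℝ → ℝ) : ℝ → ℝ → ℝ := fun x y =>
  if 0 < W x y ∧ W x y < 1 then 1 else 0

/-- A kernel `U` is `K_r`-free if `∏_{i<j} U(x_i, x_j) = 0` for a.e. `x ∈ [0,1]^r`. -/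
def KFree (r : ℕ) (U : ℝ → ℝ → ℝ) : Prop :=
  ∀ᵐ x ∂(MeasureTheory.volume.restrict (Set.univ.pi fun _ : Fin r => Set.Icc (0:ℝ) 1)),
    (∏ i : Fin r, ∏ j : Fin r, if i < j then U (x i) (x j) else 1) = 0

open Classical in
/-- The graphon `W^{(r,s)}`: equal to `1/2` off the diagonal blocks, `1` on the first `s`
diagonal blocks `I_i × I_i`, and `0` on the remaining diagonal blocks. -/
def Wrs (r s : ℕ) : ℝ → ℝ → ℝ := fun x y =>
  if ∃ i j : Fin r, i ≠ j ∧ x ∈ Set.Ioc (((i:ℕ):ℝ)/r) ((((i:ℕ):ℝ)+1)/r) ∧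
      y ∈ Set.Ioc (((j:ℕ):ℝ)/r) ((((j:ℕ):ℝ)+1)/r)
  then 1/2
  else if ∃ i : Fin r, (i:ℕ) < s ∧ x ∈ Set.Ioc (((i:ℕ):ℝ)/r) ((((i:ℕ):ℝ)+1)/r) ∧
      y ∈ Set.Ioc (((i:ℕ):ℝ)/r) ((((i:ℕ):ℝ)+1)/r)
  then 1 else 0

/-- `E_r = ⋃_{i ≠ j} I_i × I_j` where `I_i`, `i = 1, …, r`, are the consecutive
intervals of length `1/r` in `[0,1]`. -/
def Er (r : ℕ) : Set (ℝ × ℝ) :=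
  ⋃ (i : Fin r) (j : Fin r) (_ : i ≠ j),
    (Set.Ioc (((i:ℕ):ℝ)/r) ((((i:ℕ):ℝ)+1)/r)) ×ˢ (Set.Ioc (((j:ℕ):ℝ)/r) ((((j:ℕ):ℝ)+1)/r))

/-- `R_r`: the set of graphons equal to `1/2` on `E_r` and `{0,1}`-valued elsewhere
on `[0,1]²`. -/
def Rset (r : ℕ) : Set (ℝ → ℝ → ℝ) :=
  { W | IsGraphon W ∧ (∀ p ∈ Er r, W p.1 p.2 = 1/2) ∧
      ∀ p ∈ ((Set.Icc (0:ℝ) 1) ×ˢ (Set.Icc (0:ℝ) 1)) \ Er r,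
        W p.1 p.2 = 0 ∨ W p.1 p.2 = 1 }

/-- A graphon is random-free if it is `{0,1}`-valued a.e. on `[0,1]²`. -/
def IsRandomFree (W : ℝ → ℝ → ℝ) : Prop :=
  ∀ᵐ p ∂(MeasureTheory.volume.restrict ((Set.Icc (0:ℝ) 1) ×ˢ (Set.Icc (0:ℝ) 1))),
    W (Prod.fst p) (Prod.snd p) = 0 ∨ W (Prod.fst p) (Prod.snd p) = 1


/-!
Sample points of `[0,1]` and join the pairs `(x, y)` independently with probability `W(x, y)`: if
`W ∈ Q̂` and `Q` is hereditary, then the resulting graph is almost surely in `Q`, because induced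
densities are continuous in the cut distance and vanish in the limit for graphs outside `Q`. If the
randomness support of `W` is not `K_r`-free, then with positive probability `r` groups of sample
points are such that no edge between different groups is forced, so `Q` contains graphs with `r`
large parts and arbitrary edges between them. By Ramsey's theorem the parts may be taken complete
or empty, and choosing the edges between them according to symmetric Hadamard matrices, which are
quasirandom by Lindsey's lemma, gives graphs converging to `W^{(r,s)}`, of entropy `1 - 1/r`.

Conversely `Ent(W)` is at most the measure of the randomness support of `W`, which is the expected
edge density of the graph it induces on sample points. That graph is almost surely `K_{r+1}`-free,
so Turán's theorem bounds the measure by `1 - 1/r`.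
-/

section Measure

variable {Ω ι κ : Type*} [MeasurableSpace Ω] {ν : Measure Ω}

variable [Fintype ι] [Fintype κ]

theorem measurePreserving_comp_injective [IsProbabilityMeasure ν] {f : ι → κ}
    (hf : f.Injective) :
    MeasurePreserving (fun (x : κ → Ω) i => x (f i)) (Measure.pi fun _ => ν)
      (Measure.pi fun _ => ν) := by
  simp only [← Measure.infinitePi_eq_pi]
  exact ⟨by fun_prop, Measure.map_infinitePi_infinitePi_of_inj hf⟩

theorem measurePreserving_eval_prodMk [IsProbabilityMeasure ν] {i j : ι} (hij : i ≠ j) :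
    MeasurePreserving (fun x : ι → Ω => (x i, x j)) (Measure.pi fun _ => ν) (ν.prod ν) := by
  rw [← Measure.infinitePi_eq_pi]
  exact ⟨by fun_prop, Measure.infinitePi_map_eval_prod hij⟩

theorem measurePreserving_uncurry [IsProbabilityMeasure ν] :
    MeasurePreserving (fun (x : ι → κ → Ω) (p : ι × κ) => x p.1 p.2)
      (Measure.pi fun _ => Measure.pi fun _ => ν) (Measure.pi fun _ => ν) := by
  simp only [← Measure.infinitePi_eq_pi]
  exact ⟨by fun_prop, Measure.infinitePi_map_curry_symm fun _ _ => ν⟩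

theorem measurePreserving_update [DecidableEq ι] [IsProbabilityMeasure ν] (i : ι) :
    MeasurePreserving (fun p : (ι → Ω) × Ω => Function.update p.1 i p.2)
      ((Measure.pi fun _ => ν).prod ν) (Measure.pi fun _ => ν) := by
  refine ⟨by fun_prop, (Measure.pi_eq fun s hs => ?_).symm⟩
  have hpre : (fun p : (ι → Ω) × Ω => Function.update p.1 i p.2) ⁻¹' univ.pi s =
      univ.pi (Function.update s i univ) ×ˢ s i := by
    ext ⟨x, t⟩
    simp only [mem_preimage, mem_univ_pi, mem_prod, Function.forall_update_iff,
      Function.forall_update_iff (f := s) (p := fun j (A : Set Ω) => x j ∈ A)]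
    tauto
  rw [Measure.map_apply (by fun_prop) (.univ_pi hs), hpre, Measure.prod_prod, Measure.pi_pi,
    ← Finset.prod_erase_mul _ _ (Finset.mem_univ i),
    ← Finset.prod_erase_mul Finset.univ (fun j => ν (s j)) (Finset.mem_univ i)]
  rw [Function.update_self, measure_univ, mul_one]
  congr 1
  refine Finset.prod_congr rfl fun k hk => ?_
  rw [Function.update_of_ne (Finset.ne_of_mem_erase hk)]

theorem integral_eq_integral_update_update [DecidableEq ι] [IsProbabilityMeasure ν]
    {F : (ι → Ω) → ℝ} (hF : Integrable F (Measure.pi fun _ => ν)) (i j : ι) :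
    ∫ x, F x ∂(Measure.pi fun _ => ν) = ∫ x, ∫ s, ∫ t,
      F (Function.update (Function.update x i s) j t) ∂ν ∂ν ∂(Measure.pi fun _ => ν) := by
  have hupdate : MeasurePreserving (fun p : ((ι → Ω) × Ω) × Ω =>
      Function.update (Function.update p.1.1 i p.1.2) j p.2)
      (((Measure.pi fun _ => ν).prod ν).prod ν) (Measure.pi fun _ => ν) :=
    (measurePreserving_update j).comp ((measurePreserving_update i).prod (.id ν))
  have hF_update := (hupdate.integrable_comp hF.aestronglyMeasurable).2 hF
  have hmap := integral_map hupdate.measurable.aemeasurable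
    (hupdate.map_eq.symm ▸ hF.aestronglyMeasurable)
  rw [hupdate.map_eq] at hmap
  rw [hmap]
  exact (integral_prod _ hF_update).trans (integral_prod _ hF_update.integral_prod_left)

theorem measurePreserving_finCons [SigmaFinite ν] (r : ℕ) :
    MeasurePreserving (fun p : Ω × (Fin r → Ω) => (Fin.cons p.1 p.2 : Fin (r + 1) → Ω))
      (ν.prod (Measure.pi fun _ => ν)) (Measure.pi fun _ => ν) := by
  convert (measurePreserving_piFinSuccAbove (fun _ : Fin (r + 1) => ν) 0).symm using 1
  ext1 p
  exact (Fin.insertNth_zero (α := fun _ => Ω) p.1 p.2).symm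

theorem ae_of_ae_pi_exists [SigmaFinite ν] {p : Ω → Prop}
    (h : ∀ᵐ y ∂(Measure.pi fun _ : κ => ν), ∃ a, p (y a)) : ∀ᵐ t ∂ν, p t := by
  have hpi : univ.pi (fun _ : κ => {t | ¬ p t}) = {y : κ → Ω | ¬ ∃ a, p (y a)} := by
    ext y
    simp
  rw [ae_iff, ← hpi, Measure.pi_pi, Finset.prod_eq_zero_iff] at h
  obtain ⟨-, -, h⟩ := h
  rwa [ae_iff]

theorem ae_of_ae_pi_exists_selection [IsProbabilityMeasure ν] {r : ℕ} {p : (Fin r → Ω) → Prop}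
    (hp : MeasurableSet {z | p z})
    (h : ∀ᵐ x ∂(Measure.pi fun _ : Fin r => Measure.pi fun _ : κ => ν),
      ∃ f : Fin r → κ, p fun i => x i (f i)) :
    ∀ᵐ z ∂(Measure.pi fun _ => ν), p z := by
  induction r with
  | zero =>
    obtain ⟨x, f, hx⟩ := h.exists
    exact .of_forall fun z => by convert hx
  | succ r ih =>
    have hcons := measurePreserving_finCons (ν := ν) r
    have hp_cons : MeasurableSet {q : Ω × (Fin r → Ω) | p (Fin.cons q.1 q.2)} :=
      hcons.measurable hp
    have hrest : ∀ᵐ y ∂(Measure.pi fun _ : κ => ν), ∀ᵐ z ∂(Measure.pi fun _ : Fin r => ν),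
        ∃ a, p (Fin.cons (y a) z) := by
      filter_upwards [Measure.ae_ae_of_ae_prod
        ((measurePreserving_finCons r).quasiMeasurePreserving.ae h)] with y hy
      refine ih ?_ (hy.mono fun x ⟨f, hf⟩ => ⟨fun i => f i.succ, f 0, ?_⟩)
      · simp only [ofPred_exists]
        exact .iUnion fun a => measurable_prodMk_left hp_cons
      · convert hf using 1
        ext i
        cases i using Fin.cases <;> simp
    have hswap : ∀ᵐ z ∂(Measure.pi fun _ : Fin r => ν), ∀ᵐ t ∂ν, p (Fin.cons t z) := by
      have hmeas : MeasurableSet {q : (κ → Ω) × (Fin r → Ω) | ∃ a, p (Fin.cons (q.1 a) q.2)} := by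
        simp only [ofPred_exists]
        exact .iUnion fun a =>
          (show Measurable fun q : (κ → Ω) × (Fin r → Ω) => (q.1 a, q.2) by fun_prop) hp_cons
      exact ((Measure.ae_ae_comm hmeas).1 hrest).mono fun z hz => ae_of_ae_pi_exists hz
    rw [← hcons.map_eq, ae_map_iff hcons.measurable.aemeasurable hp,
      Measure.ae_prod_iff_ae_ae hp_cons]
    exact (Measure.ae_ae_comm hp_cons).2 hswap

end Measure

section IntegralMul

variable {α β : Type*} [MeasurableSpace α] [MeasurableSpace β] {μ : Measure α} {ν : Measure β}
  {ε : ℝ}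

theorem integrable_mul_of_mem_Icc {Φ f : α → ℝ} (hΦ : Integrable Φ μ) (hf : Measurable f)
    (hf01 : ∀ x, f x ∈ Icc (0 : ℝ) 1) : Integrable (fun x => Φ x * f x) μ :=
  hΦ.mul_bdd (c := 1) hf.aestronglyMeasurable <| .of_forall fun x => by
    rw [Real.norm_of_nonneg (hf01 x).1]
    exact (hf01 x).2

theorem integral_mul_le_setIntegral_pos {Φ f : α → ℝ} (hΦm : Measurable Φ) (hΦ : Integrable Φ μ)
    (hf : Measurable f) (hf01 : ∀ x, f x ∈ Icc (0 : ℝ) 1) :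
    ∫ x, Φ x * f x ∂μ ≤ ∫ x in {x | 0 < Φ x}, Φ x ∂μ := by
  have hS : MeasurableSet {x | 0 < Φ x} := measurableSet_lt measurable_const hΦm
  rw [← integral_indicator hS]
  refine integral_mono (integrable_mul_of_mem_Icc hΦ hf hf01) (hΦ.indicator hS) fun x => ?_
  by_cases hx : 0 < Φ x
  · rw [indicator_of_mem (show x ∈ {x | 0 < Φ x} from hx)]
    exact mul_le_of_le_one_right hx.le (hf01 x).2
  · rw [indicator_of_notMem (show x ∉ {x | 0 < Φ x} from hx)]
    exact mul_nonpos_of_nonpos_of_nonneg (not_lt.1 hx) (hf01 x).1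

theorem abs_integral_mul_le_of_forall_setIntegral {Φ f : α → ℝ} (hΦm : Measurable Φ)
    (hΦ : Integrable Φ μ) (hf : Measurable f) (hf01 : ∀ x, f x ∈ Icc (0 : ℝ) 1)
    (h : ∀ S, MeasurableSet S → |∫ x in S, Φ x ∂μ| ≤ ε) : |∫ x, Φ x * f x ∂μ| ≤ ε := by
  refine abs_le'.2 ⟨?_, ?_⟩
  · exact (integral_mul_le_setIntegral_pos hΦm hΦ hf hf01).trans
      ((le_abs_self _).trans (h _ (measurableSet_lt measurable_const hΦm)))
  · have hneg := integral_mul_le_setIntegral_pos hΦm.neg hΦ.neg hf hf01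
    simp only [Pi.neg_apply, neg_mul, integral_neg] at hneg
    exact hneg.trans ((neg_le_abs _).trans (h _ (measurableSet_lt measurable_const hΦm.neg)))

theorem abs_integral_integral_mul_le_of_forall_setIntegral [SFinite μ] [SFinite ν]
    {U : α → β → ℝ} (hUm : Measurable (Function.uncurry U))
    (hU : Integrable (Function.uncurry U) (μ.prod ν))
    (h : ∀ S T, MeasurableSet S → MeasurableSet T → |∫ x in S, ∫ y in T, U x y ∂ν ∂μ| ≤ ε)
    {f : α → ℝ} {g : β → ℝ} (hf : Measurable f) (hg : Measurable g)
    (hf01 : ∀ x, f x ∈ Icc (0 : ℝ) 1) (hg01 : ∀ y, g y ∈ Icc (0 : ℝ) 1) :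
    |∫ x, ∫ y, U x y * (f x * g y) ∂ν ∂μ| ≤ ε := by
  have hUg : Measurable (Function.uncurry fun x y => U x y * g y) :=
    hUm.mul (hg.comp measurable_snd)
  have hUgi : Integrable (Function.uncurry fun x y => U x y * g y) (μ.prod ν) :=
    integrable_mul_of_mem_Icc hU (hg.comp measurable_snd) fun p => hg01 p.2
  have hslice : ∀ x, ∫ y, U x y * (f x * g y) ∂ν = (∫ y, U x y * g y ∂ν) * f x := fun x => by
    rw [← integral_mul_const]
    simp only [mul_assoc, mul_comm (f x)]
  simp only [hslice]
  refine abs_integral_mul_le_of_forall_setIntegral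
    hUg.stronglyMeasurable.integral_prod_right.measurable hUgi.integral_prod_left hf hf01
    fun S hS => ?_
  have hrestrict : ∀ {F : α × β → ℝ} (T : Set β), Integrable F (μ.prod ν) →
      Integrable F ((μ.restrict S).prod (ν.restrict T)) := fun T hF => by
    rw [Measure.prod_restrict]
    exact hF.restrict
  have hUS : Integrable (Function.uncurry U) ((μ.restrict S).prod ν) := by
    simpa only [Measure.restrict_univ] using hrestrict univ hU
  rw [integral_integral_swap (by simpa only [Measure.restrict_univ] using hrestrict univ hUgi)]
  simp only [integral_mul_const]
  refine abs_integral_mul_le_of_forall_setIntegral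
    hUm.stronglyMeasurable.integral_prod_left.measurable hUS.integral_prod_right hg hg01
    fun T hT => ?_
  rw [← integral_integral_swap (hrestrict T hU)]
  exact h S T hS hT

end IntegralMul

section CutNorm

/-- The uniform probability measure on `[0,1]`, as a measure on `ℝ`. -/
abbrev unitMeasure : Measure ℝ := volume.restrict (Icc 0 1)

instance : IsProbabilityMeasure unitMeasure := ⟨by simp⟩

theorem unitMeasure_restrict_prod_restrict {S T : Set ℝ} (hS : MeasurableSet S)
    (hT : MeasurableSet T) :
    (unitMeasure.restrict S).prod (unitMeasure.restrict T) =
      volume.restrict ((S ∩ Icc 0 1) ×ˢ (T ∩ Icc 0 1)) := by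
  rw [Measure.restrict_restrict hS, Measure.restrict_restrict hT, Measure.prod_restrict]
  rfl

theorem IsGraphon.symm {W : ℝ → ℝ → ℝ} (hW : IsGraphon W) (x y : ℝ) : W x y = W y x := hW.1 x y

theorem IsGraphon.measurable {W : ℝ → ℝ → ℝ} (hW : IsGraphon W) :
    Measurable (Function.uncurry W) := hW.2.1

theorem IsGraphon.mem_Icc {W : ℝ → ℝ → ℝ} (hW : IsGraphon W) (x y : ℝ) :
    W x y ∈ Icc (0 : ℝ) 1 := hW.2.2 x y

theorem IsGraphon.comp {W : ℝ → ℝ → ℝ} (hW : IsGraphon W) {σ : ℝ → ℝ} (hσ : Measurable σ) :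
    IsGraphon fun x y => W (σ x) (σ y) :=
  ⟨fun _ _ => hW.symm _ _,
    hW.measurable.comp ((hσ.comp measurable_fst).prodMk (hσ.comp measurable_snd)),
    fun _ _ => hW.mem_Icc _ _⟩

theorem IsGraphon.measurable_eval {W : ℝ → ℝ → ℝ} (hW : IsGraphon W) {ι : Type*} (i j : ι) :
    Measurable fun x : ι → ℝ => W (x i) (x j) :=
  hW.measurable.comp (f := fun x : ι → ℝ => (x i, x j)) (by fun_prop)

theorem IsGraphon.one_sub {W : ℝ → ℝ → ℝ} (hW : IsGraphon W) :
    IsGraphon fun x y => 1 - W x y :=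
  ⟨fun x y => by simp only [hW.symm x y], measurable_const.sub hW.measurable,
    fun x y => ⟨sub_nonneg.2 (hW.mem_Icc x y).2, sub_le_self _ (hW.mem_Icc x y).1⟩⟩

theorem IsGraphon.integrable {W : ℝ → ℝ → ℝ} (hW : IsGraphon W) :
    Integrable (Function.uncurry W) (unitMeasure.prod unitMeasure) :=
  .of_mem_Icc 0 1 hW.measurable.aemeasurable (.of_forall fun p => hW.mem_Icc p.1 p.2)

theorem IsGraphon.integrable_sub {U W : ℝ → ℝ → ℝ} (hU : IsGraphon U) (hW : IsGraphon W) :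
    Integrable (Function.uncurry fun x y => U x y - W x y) (unitMeasure.prod unitMeasure) :=
  hU.integrable.sub hW.integrable

theorem cutNorm_nonneg (U : ℝ → ℝ → ℝ) : 0 ≤ cutNorm U := by
  refine Real.sSup_nonneg ?_
  rintro _ ⟨S, T, -, -, -, -, rfl⟩
  exact abs_nonneg _

theorem abs_setIntegral_le_cutNorm {U : ℝ → ℝ → ℝ}
    (hU : Integrable (Function.uncurry U) (unitMeasure.prod unitMeasure)) {S T : Set ℝ}
    (hS : MeasurableSet S) (hT : MeasurableSet T) :
    |∫ x in S, ∫ y in T, U x y ∂unitMeasure ∂unitMeasure| ≤ cutNorm U := by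
  have hprod : ∀ {S T : Set ℝ}, MeasurableSet S → MeasurableSet T →
      ∫ x in S, ∫ y in T, U x y ∂unitMeasure ∂unitMeasure =
        ∫ p in (S ∩ Icc 0 1) ×ˢ (T ∩ Icc 0 1), U p.1 p.2 := fun {S T} hS hT => by
    rw [← unitMeasure_restrict_prod_restrict hS hT, integral_prod]
    rw [Measure.prod_restrict]
    exact hU.restrict
  rw [hprod hS hT]
  refine le_csSup ⟨∫ p, |Function.uncurry U p| ∂unitMeasure.prod unitMeasure, ?_⟩
    ⟨S ∩ Icc 0 1, T ∩ Icc 0 1, hS.inter measurableSet_Icc, hT.inter measurableSet_Icc,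
      inter_subset_right, inter_subset_right, rfl⟩
  rintro _ ⟨S, T, hS, hT, hS1, hT1, rfl⟩
  rw [← inter_eq_left.2 hS1, ← inter_eq_left.2 hT1, ← unitMeasure_restrict_prod_restrict hS hT,
    Measure.prod_restrict]
  exact (abs_integral_le_integral_abs).trans
    (setIntegral_le_integral hU.abs (.of_forall fun _ => abs_nonneg _))

theorem IsGraphon.abs_integral_sub_mul_le_dCut {U W : ℝ → ℝ → ℝ} (hU : IsGraphon U)
    (hW : IsGraphon W) {f g : ℝ → ℝ} (hf : Measurable f) (hg : Measurable g)
    (hf01 : ∀ x, f x ∈ Icc (0 : ℝ) 1) (hg01 : ∀ y, g y ∈ Icc (0 : ℝ) 1) :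
    |∫ x, ∫ y, (U x y - W x y) * (f x * g y) ∂unitMeasure ∂unitMeasure| ≤ dCut U W :=
  abs_integral_integral_mul_le_of_forall_setIntegral (hU.measurable.sub hW.measurable)
    (hU.integrable_sub hW)
    (fun _ _ hS hT => abs_setIntegral_le_cutNorm (hU.integrable_sub hW) hS hT) hf hg hf01 hg01

theorem isMPSelf_id : IsMPSelf id := ⟨.id _, mapsTo_id _⟩

theorem deltaCut_nonneg (U W : ℝ → ℝ → ℝ) : 0 ≤ deltaCut U W := by
  refine Real.sInf_nonneg ?_
  rintro _ ⟨σ₁, σ₂, -, -, rfl⟩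
  exact cutNorm_nonneg _

theorem deltaCut_le_dCut (U W : ℝ → ℝ → ℝ) : deltaCut U W ≤ dCut U W := by
  refine csInf_le ⟨0, ?_⟩ ⟨id, id, isMPSelf_id, isMPSelf_id, rfl⟩
  rintro _ ⟨σ₁, σ₂, -, -, rfl⟩
  exact cutNorm_nonneg _

theorem le_deltaCut {U W : ℝ → ℝ → ℝ} {c : ℝ}
    (h : ∀ σ₁ σ₂, IsMPSelf σ₁ → IsMPSelf σ₂ →
      c ≤ dCut (fun x y => U (σ₁ x) (σ₁ y)) (fun x y => W (σ₂ x) (σ₂ y))) :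
    c ≤ deltaCut U W := by
  refine le_csInf ⟨_, id, id, isMPSelf_id, isMPSelf_id, rfl⟩ ?_
  rintro _ ⟨σ₁, σ₂, h₁, h₂, rfl⟩
  exact h σ₁ σ₂ h₁ h₂

end CutNorm

section Counting

variable {ι : Type*}

/-- The homomorphism-density integrand `∏_{(i,j) ∈ P} K_{ij}(x_i, x_j)` of a family of kernels
`K` indexed by the pairs in `P`. -/
def pairProd (P : Finset (ι × ι)) (K : ι × ι → ℝ → ℝ → ℝ) (x : ι → ℝ) : ℝ :=
  ∏ e ∈ P, K e (x e.1) (x e.2)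

theorem pairProd_mem_Icc (P : Finset (ι × ι)) {K : ι × ι → ℝ → ℝ → ℝ}
    (hK : ∀ e, IsGraphon (K e)) (x : ι → ℝ) : pairProd P K x ∈ Icc (0 : ℝ) 1 :=
  ⟨Finset.prod_nonneg fun e _ => ((hK e).mem_Icc _ _).1,
    Finset.prod_le_one (fun e _ => ((hK e).mem_Icc _ _).1) fun e _ => ((hK e).mem_Icc _ _).2⟩

theorem dependsOn_pairProd {P : Finset (ι × ι)} {s : Set ι} (hP : ∀ e ∈ P, e.1 ∈ s ∧ e.2 ∈ s)
    (K : ι × ι → ℝ → ℝ → ℝ) : DependsOn (pairProd P K) s := fun x y hxy =>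
  Finset.prod_congr rfl fun e he => by rw [hxy _ (hP e he).1, hxy _ (hP e he).2]

theorem measurable_pairProd (P : Finset (ι × ι)) {K : ι × ι → ℝ → ℝ → ℝ}
    (hK : ∀ e, IsGraphon (K e)) : Measurable (pairProd P K) :=
  Finset.measurable_prod _ fun e _ => (hK e).measurable_eval e.1 e.2

variable [Fintype ι]

/-- The uniform probability measure on the cube `[0,1]^ι`. -/
abbrev cubeMeasure (ι : Type*) [Fintype ι] : Measure (ι → ℝ) := Measure.pi fun _ => unitMeasure

theorem IsGraphon.integrable_eval {W : ℝ → ℝ → ℝ} (hW : IsGraphon W) (i j : ι) :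
    Integrable (fun x => W (x i) (x j)) (cubeMeasure ι) :=
  .of_mem_Icc 0 1 (hW.measurable_eval i j).aemeasurable (.of_forall fun _ => hW.mem_Icc _ _)

theorem integrable_pairProd (P : Finset (ι × ι)) {K : ι × ι → ℝ → ℝ → ℝ}
    (hK : ∀ e, IsGraphon (K e)) : Integrable (pairProd P K) (cubeMeasure ι) :=
  .of_mem_Icc 0 1 (measurable_pairProd P hK).aemeasurable
    (.of_forall (pairProd_mem_Icc P hK))

theorem IsGraphon.abs_integral_eval_sub_mul_le_dCut {U W : ℝ → ℝ → ℝ} (hU : IsGraphon U)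
    (hW : IsGraphon W) {i j : ι} (hij : i ≠ j) {φ ψ : (ι → ℝ) → ℝ} (hφ : Measurable φ)
    (hψ : Measurable ψ) (hφ01 : ∀ x, φ x ∈ Icc (0 : ℝ) 1) (hψ01 : ∀ x, ψ x ∈ Icc (0 : ℝ) 1)
    (hφj : DependsOn φ {j}ᶜ) (hψi : DependsOn ψ {i}ᶜ) :
    |∫ x, (U (x i) (x j) - W (x i) (x j)) * (φ x * ψ x) ∂cubeMeasure ι| ≤ dCut U W := by
  classical
  let F : (ι → ℝ) → ℝ := fun x => (U (x i) (x j) - W (x i) (x j)) * (φ x * ψ x)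
  have hF : Integrable F (cubeMeasure ι) := by
    refine integrable_mul_of_mem_Icc ?_ (hφ.mul hψ) fun x =>
      ⟨mul_nonneg (hφ01 x).1 (hψ01 x).1, mul_le_one₀ (hφ01 x).2 (hψ01 x).1 (hψ01 x).2⟩
    exact ((measurePreserving_eval_prodMk hij).integrable_comp
      (hU.integrable_sub hW).aestronglyMeasurable).2 (hU.integrable_sub hW)
  have hF_update : ∀ z s t, F (Function.update (Function.update z i s) j t) =
      (U s t - W s t) * (φ (Function.update z i s) * ψ (Function.update z j t)) := fun z s t => by
    have hφ_update : φ (Function.update (Function.update z i s) j t) = φ (Function.update z i s) :=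
      hφj fun k hk => Function.update_of_ne hk _ _
    have hψ_update : ψ (Function.update (Function.update z i s) j t) =
        ψ (Function.update z j t) := by
      rw [Function.update_comm hij]
      exact hψi fun k hk => Function.update_of_ne hk _ _
    simp only [F, hφ_update, hψ_update]
    simp [Function.update_of_ne hij]
  have hbound : ∀ z : ι → ℝ, ‖∫ s, ∫ t, F (Function.update (Function.update z i s) j t)
      ∂unitMeasure ∂unitMeasure‖ ≤ dCut U W := fun z => by
    simp only [hF_update]
    exact hU.abs_integral_sub_mul_le_dCut hW (by fun_prop) (by fun_prop) (fun _ => hφ01 _)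
      fun _ => hψ01 _
  change |∫ x, F x ∂cubeMeasure ι| ≤ _
  rw [integral_eq_integral_update_update hF i j]
  simpa using norm_integral_le_of_norm_le_const (μ := cubeMeasure ι) (.of_forall hbound)

theorem abs_integral_pairProd_update_sub_le [LinearOrder ι] {P : Finset (ι × ι)}
    (hP : ∀ e ∈ P, e.1 < e.2) {K : ι × ι → ℝ → ℝ → ℝ} (hK : ∀ e, IsGraphon (K e))
    {U : ℝ → ℝ → ℝ} (hU : IsGraphon U) {e : ι × ι} (he : e ∈ P) :
    |∫ x, pairProd P (Function.update K e U) x ∂cubeMeasure ι -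
      ∫ x, pairProd P K x ∂cubeMeasure ι| ≤ dCut U (K e) := by
  have hK' : ∀ e', IsGraphon (Function.update K e U e') :=
    (Function.forall_update_iff K fun _ => IsGraphon).2 ⟨hU, fun e' _ => hK e'⟩
  set A := (P.erase e).filter fun e' => e'.1 = e.1 ∨ e'.2 = e.1 with hA
  set B := (P.erase e).filter fun e' => ¬ (e'.1 = e.1 ∨ e'.2 = e.1) with hB
  have hfactor : ∀ x, pairProd P (Function.update K e U) x - pairProd P K x =
      (U (x e.1) (x e.2) - K e (x e.1) (x e.2)) * (pairProd A K x * pairProd B K x) := fun x => by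
    have hrest : ∏ e' ∈ P.erase e, Function.update K e U e' (x e'.1) (x e'.2) =
        ∏ e' ∈ P.erase e, K e' (x e'.1) (x e'.2) := Finset.prod_congr rfl fun e' he' => by
      rw [Function.update_of_ne (Finset.ne_of_mem_erase he')]
    simp only [pairProd, hA, hB, Finset.prod_filter_mul_prod_filter_not]
    rw [← Finset.mul_prod_erase P _ he, ← Finset.mul_prod_erase P (fun e => K e _ _) he, hrest,
      Function.update_self, sub_mul]
  rw [← integral_sub (integrable_pairProd P hK') (integrable_pairProd P hK)]
  simp only [hfactor]
  refine hU.abs_integral_eval_sub_mul_le_dCut (hK e) (hP e he).ne (measurable_pairProd A hK)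
    (measurable_pairProd B hK) (pairProd_mem_Icc A hK) (pairProd_mem_Icc B hK)
    (dependsOn_pairProd (fun e' he' => ?_) K) (dependsOn_pairProd (fun e' he' => ?_) K)
  · simp only [hA, Finset.mem_filter, Finset.mem_erase] at he'
    have := hP e he
    have := hP e' he'.1.2
    simp only [mem_compl_iff, mem_singleton_iff]
    grind [Prod.ext_iff]
  · simpa [hB, not_or] using (Finset.mem_filter.1 he').2

theorem abs_integral_pairProd_sub_le [LinearOrder ι] {P : Finset (ι × ι)}
    (hP : ∀ e ∈ P, e.1 < e.2) {K L : ι × ι → ℝ → ℝ → ℝ} (hK : ∀ e, IsGraphon (K e))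
    (hL : ∀ e, IsGraphon (L e)) :
    |∫ x, pairProd P K x ∂cubeMeasure ι - ∫ x, pairProd P L x ∂cubeMeasure ι| ≤
      ∑ e ∈ P, dCut (K e) (L e) := by
  suffices key : ∀ S ⊆ P, |∫ x, pairProd P (S.piecewise K L) x ∂cubeMeasure ι -
      ∫ x, pairProd P L x ∂cubeMeasure ι| ≤ ∑ e ∈ S, dCut (K e) (L e) by
    have hKP : pairProd P (P.piecewise K L) = pairProd P K := funext fun x =>
      Finset.prod_congr rfl fun e he => by rw [Finset.piecewise_eq_of_mem _ _ _ he]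
    simpa only [hKP] using key P subset_rfl
  intro S
  induction S using Finset.induction_on with
  | empty => simp
  | insert e S he ih =>
    intro hS
    rw [Finset.insert_subset_iff] at hS
    have hM : ∀ e, IsGraphon (S.piecewise K L e) := fun e =>
      S.piecewise_cases K L (fun U => IsGraphon U) (hK e) (hL e)
    have hstep := abs_integral_pairProd_update_sub_le hP hM (hK e) hS.1
    rw [Finset.piecewise_eq_of_notMem _ _ _ he] at hstep
    rw [Finset.piecewise_insert, Finset.sum_insert he]
    exact (abs_sub_le _ _ _).trans (add_le_add hstep (ih hS.2))

end Counting

section InducedDensity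

open Classical in
/-- The kernel on the pair `e` whose product over all pairs is the density integrand of induced
copies of `F`: `W` if `e` is an edge of `F` and `1 - W` otherwise. -/
def inducedKernel {V : Type*} (F : SimpleGraph V) (W : ℝ → ℝ → ℝ) (e : V × V) : ℝ → ℝ → ℝ :=
  fun x y => if F.Adj e.1 e.2 then W x y else 1 - W x y

theorem inducedKernel_of_adj {V : Type*} {F : SimpleGraph V} {e : V × V} (he : F.Adj e.1 e.2)
    (W : ℝ → ℝ → ℝ) : inducedKernel F W e = W :=
  funext₂ fun _ _ => if_pos he

theorem inducedKernel_of_not_adj {V : Type*} {F : SimpleGraph V} {e : V × V}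
    (he : ¬ F.Adj e.1 e.2) (W : ℝ → ℝ → ℝ) : inducedKernel F W e = fun x y => 1 - W x y :=
  funext₂ fun _ _ => if_neg he

theorem isGraphon_inducedKernel {V : Type*} (F : SimpleGraph V) {W : ℝ → ℝ → ℝ}
    (hW : IsGraphon W) (e : V × V) : IsGraphon (inducedKernel F W e) := by
  by_cases he : F.Adj e.1 e.2
  · rwa [inducedKernel_of_adj he]
  · rw [inducedKernel_of_not_adj he]
    exact hW.one_sub

/-- The pairs `(i, j)` with `i < j`, each standing for one unordered pair of vertices. -/
def increasingPairs (k : ℕ) : Finset (Fin k × Fin k) :=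
  Finset.univ.filter fun e => e.1 < e.2

variable {k : ℕ} (F : SimpleGraph (Fin k)) {U W : ℝ → ℝ → ℝ}

theorem mem_increasingPairs {e : Fin k × Fin k} : e ∈ increasingPairs k ↔ e.1 < e.2 := by
  simp [increasingPairs]

theorem card_increasingPairs_le (k : ℕ) : (increasingPairs k).card ≤ k ^ 2 :=
  (Finset.card_le_univ _).trans_eq (by simp [sq])

theorem restrict_univ_pi_Icc (ι : Type*) [Fintype ι] :
    volume.restrict (univ.pi fun _ : ι => Icc (0 : ℝ) 1) = cubeMeasure ι := by
  rw [volume_pi, Measure.restrict_pi_pi]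

theorem inducedDensity_eq_integral_pairProd (W : ℝ → ℝ → ℝ) :
    inducedDensity F W =
      ∫ x, pairProd (increasingPairs k) (inducedKernel F W) x ∂cubeMeasure (Fin k) := by
  rw [inducedDensity, restrict_univ_pi_Icc]
  congr! 2
  rw [pairProd, increasingPairs, Finset.prod_filter, ← Finset.univ_product_univ,
    Finset.prod_product]
  rfl

theorem IsGraphon.inducedDensity_comp (hW : IsGraphon W) {σ : ℝ → ℝ} (hσ : IsMPSelf σ) :
    inducedDensity F (fun x y => W (σ x) (σ y)) = inducedDensity F W := by
  have hσ_pi : MeasurePreserving (fun (x : Fin k → ℝ) i => σ (x i)) (cubeMeasure (Fin k))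
      (cubeMeasure (Fin k)) := measurePreserving_pi _ _ fun _ => hσ.1
  rw [inducedDensity_eq_integral_pairProd, inducedDensity_eq_integral_pairProd,
    ← hσ_pi.map_eq, integral_map hσ_pi.measurable.aemeasurable
      (measurable_pairProd _ (isGraphon_inducedKernel F hW)).aestronglyMeasurable, hσ_pi.map_eq]
  rfl

theorem dCut_one_sub (U W : ℝ → ℝ → ℝ) :
    dCut (fun x y => 1 - U x y) (fun x y => 1 - W x y) = dCut U W := by
  have hneg : ∀ p : ℝ × ℝ, 1 - U p.1 p.2 - (1 - W p.1 p.2) = -(U p.1 p.2 - W p.1 p.2) :=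
    fun p => by ring
  simp only [dCut, cutNorm, hneg, integral_neg, abs_neg]

theorem dCut_inducedKernel {V : Type*} (F : SimpleGraph V) (U W : ℝ → ℝ → ℝ) (e : V × V) :
    dCut (inducedKernel F U e) (inducedKernel F W e) = dCut U W := by
  by_cases he : F.Adj e.1 e.2
  · rw [inducedKernel_of_adj he, inducedKernel_of_adj he]
  · rw [inducedKernel_of_not_adj he, inducedKernel_of_not_adj he]
    exact dCut_one_sub U W

theorem IsGraphon.abs_inducedDensity_sub_le_dCut (hU : IsGraphon U) (hW : IsGraphon W) :
    |inducedDensity F U - inducedDensity F W| ≤ k ^ 2 * dCut U W := by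
  calc |inducedDensity F U - inducedDensity F W|
      ≤ ∑ e ∈ increasingPairs k, dCut (inducedKernel F U e) (inducedKernel F W e) := by
        rw [inducedDensity_eq_integral_pairProd, inducedDensity_eq_integral_pairProd]
        exact abs_integral_pairProd_sub_le (fun e he => mem_increasingPairs.1 he)
          (isGraphon_inducedKernel F hU) (isGraphon_inducedKernel F hW)
    _ = (increasingPairs k).card * dCut U W := by
        simp only [dCut_inducedKernel, Finset.sum_const, nsmul_eq_mul]
    _ ≤ k ^ 2 * dCut U W := mul_le_mul_of_nonneg_right
        (by exact_mod_cast card_increasingPairs_le k) (cutNorm_nonneg _)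

theorem IsGraphon.abs_inducedDensity_sub_le_deltaCut (hU : IsGraphon U) (hW : IsGraphon W) :
    |inducedDensity F U - inducedDensity F W| ≤ k ^ 2 * deltaCut U W := by
  rcases k.eq_zero_or_pos with rfl | hk
  · simp [inducedDensity]
  rw [← div_le_iff₀' (by positivity)]
  refine le_deltaCut fun σ₁ σ₂ h₁ h₂ => ?_
  rw [div_le_iff₀' (by positivity), ← hU.inducedDensity_comp F h₁, ← hW.inducedDensity_comp F h₂]
  exact (hU.comp h₁.1.measurable).abs_inducedDensity_sub_le_dCut F (hW.comp h₂.1.measurable)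

theorem IsGraphon.tendsto_inducedDensity {α : Type*} {l : Filter α} {u : α → ℝ → ℝ → ℝ}
    (hu : ∀ a, IsGraphon (u a)) (hW : IsGraphon W)
    (h : Tendsto (fun a => deltaCut (u a) W) l (nhds 0)) :
    Tendsto (fun a => inducedDensity F (u a)) l (nhds (inducedDensity F W)) := by
  rw [tendsto_iff_norm_sub_tendsto_zero]
  exact squeeze_zero (fun _ => norm_nonneg _)
    (fun a => (hu a).abs_inducedDensity_sub_le_deltaCut F hW) (by simpa using h.const_mul _)

end InducedDensity

section Cells

theorem ae_unitMeasure_mem_Ioc : ∀ᵐ x ∂unitMeasure, x ∈ Ioc (0 : ℝ) 1 := by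
  rw [unitMeasure, ← restrict_Ioc_eq_restrict_Icc]
  exact ae_restrict_mem measurableSet_Ioc

theorem ae_cubeMeasure_mem_Ioc (ι : Type*) [Fintype ι] :
    ∀ᵐ x ∂cubeMeasure ι, ∀ i, x i ∈ Ioc (0 : ℝ) 1 :=
  ae_all_iff.2 fun i =>
    (measurePreserving_eval _ i).quasiMeasurePreserving.ae ae_unitMeasure_mem_Ioc

theorem isGraphon_ceil (n : ℕ) {g : ℤ → ℤ → ℝ} (hsymm : ∀ a b, g a b = g b a)
    (hg : ∀ a b, g a b ∈ Icc (0 : ℝ) 1) : IsGraphon fun x y => g ⌈(n : ℝ) * x⌉ ⌈(n : ℝ) * y⌉ :=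
  ⟨fun _ _ => hsymm _ _,
    (measurable_of_countable (Function.uncurry g)).comp
      (by fun_prop : Measurable fun p : ℝ × ℝ => (⌈(n : ℝ) * p.1⌉, ⌈(n : ℝ) * p.2⌉)),
    fun _ _ => hg _ _⟩

theorem isGraphon_graphonOfGraph {n : ℕ} (G : SimpleGraph (Fin n)) :
    IsGraphon (graphonOfGraph G) := by
  classical
  refine isGraphon_ceil n (g := fun a b => if ∃ i j : Fin n, G.Adj i j ∧ a = ((i : ℕ) : ℤ) + 1 ∧
    b = ((j : ℕ) : ℤ) + 1 then (1 : ℝ) else 0) (fun a b => ?_) fun a b => ?_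
  · congr! 1
    exact ⟨fun ⟨i, j, h, ha, hb⟩ => ⟨j, i, h.symm, hb, ha⟩,
      fun ⟨i, j, h, hb, ha⟩ => ⟨j, i, h.symm, ha, hb⟩⟩
  · beta_reduce
    split_ifs <;> simp

variable {n : ℕ} [NeZero n]

/-- The index of the part containing `x` when `(0, 1]` is cut into the consecutive intervals
`(i/n, (i+1)/n]`; meaningful for `x ∈ (0, 1]` only. -/
def cell (n : ℕ) [NeZero n] (x : ℝ) : Fin n := Fin.ofNat n (⌈(n : ℝ) * x⌉ - 1).toNat

theorem measurable_cell : Measurable (cell n) :=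
  (measurable_of_countable fun z : ℤ => Fin.ofNat n (z - 1).toNat).comp
    (by fun_prop : Measurable fun x : ℝ => ⌈(n : ℝ) * x⌉)

theorem ceil_mul_eq_iff_cell_eq {x : ℝ} (hx : x ∈ Ioc (0 : ℝ) 1) {i : Fin n} :
    ⌈(n : ℝ) * x⌉ = ((i : ℕ) : ℤ) + 1 ↔ cell n x = i := by
  have hn : (0 : ℝ) < n := by exact_mod_cast NeZero.pos n
  have hpos : 0 < ⌈(n : ℝ) * x⌉ := Int.ceil_pos.2 (mul_pos hn hx.1)
  have hle : ⌈(n : ℝ) * x⌉ ≤ n :=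
    Int.ceil_le.2 (by exact_mod_cast mul_le_of_le_one_right hn.le hx.2)
  have hcell : (cell n x : ℕ) = (⌈(n : ℝ) * x⌉ - 1).toNat := Nat.mod_eq_of_lt (by omega)
  rw [Fin.ext_iff, hcell]
  omega

theorem mem_Ioc_div_iff_ceil_mul_eq {x : ℝ} {i : ℕ} :
    x ∈ Ioc ((i : ℝ) / n) (((i : ℝ) + 1) / n) ↔ ⌈(n : ℝ) * x⌉ = (i : ℤ) + 1 := by
  have hn : (0 : ℝ) < n := by exact_mod_cast NeZero.pos n
  rw [Int.ceil_eq_iff, mem_Ioc, div_lt_iff₀' hn, le_div_iff₀' hn]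
  push_cast
  rw [add_sub_cancel_right]

theorem mem_Ioc_div_iff_cell_eq {x : ℝ} (hx : x ∈ Ioc (0 : ℝ) 1) {i : Fin n} :
    x ∈ Ioc (((i : ℕ) : ℝ) / n) ((((i : ℕ) : ℝ) + 1) / n) ↔ cell n x = i :=
  mem_Ioc_div_iff_ceil_mul_eq.trans (ceil_mul_eq_iff_cell_eq hx)

theorem unitMeasure_real_preimage_cell (i : Fin n) :
    unitMeasure.real (cell n ⁻¹' {i}) = 1 / n := by
  have hn : (0 : ℝ) < n := by exact_mod_cast NeZero.pos n
  have hsub : Ioc (((i : ℕ) : ℝ) / n) ((((i : ℕ) : ℝ) + 1) / n) ⊆ Icc 0 1 := fun x hx =>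
    ⟨(by positivity : (0 : ℝ) ≤ _).trans hx.1.le,
      hx.2.trans ((div_le_one hn).2 (by exact_mod_cast i.isLt))⟩
  have hcell : (cell n ⁻¹' {i} : Set ℝ) =ᵐ[unitMeasure]
      Ioc (((i : ℕ) : ℝ) / n) ((((i : ℕ) : ℝ) + 1) / n) := by
    filter_upwards [ae_unitMeasure_mem_Ioc] with x hx
    exact propext (mem_Ioc_div_iff_cell_eq hx).symm
  rw [measureReal_congr hcell, measureReal_restrict_apply measurableSet_Ioc,
    inter_eq_left.2 hsub, Real.volume_real_Ioc_of_le (by gcongr; simp)]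
  ring

theorem integral_cell (μ : Measure ℝ) [IsFiniteMeasure μ] (g : Fin n → ℝ) :
    ∫ x, g (cell n x) ∂μ = ∑ u, μ.real (cell n ⁻¹' {u}) * g u := by
  rw [← integral_map measurable_cell.aemeasurable
    (measurable_of_countable g).aestronglyMeasurable, integral_fintype .of_finite]
  simp only [map_measureReal_apply measurable_cell (measurableSet_singleton _), smul_eq_mul]

theorem integral_integral_cell (μ ν : Measure ℝ) [IsFiniteMeasure μ] [IsFiniteMeasure ν]
    (c : Fin n → Fin n → ℝ) :
    ∫ x, ∫ y, c (cell n x) (cell n y) ∂ν ∂μ =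
      ∑ u, ∑ v, μ.real (cell n ⁻¹' {u}) * ν.real (cell n ⁻¹' {v}) * c u v := by
  have hinner : ∀ x, ∫ y, c (cell n x) (cell n y) ∂ν =
      ∑ v, ν.real (cell n ⁻¹' {v}) * c (cell n x) v := fun x => integral_cell ν _
  simp only [hinner, integral_cell μ fun u => ∑ v, ν.real (cell n ⁻¹' {v}) * c u v,
    Finset.mul_sum, mul_assoc]

theorem graphonOfGraph_eq_cell (G : SimpleGraph (Fin n)) [DecidableRel G.Adj] {x y : ℝ}
    (hx : x ∈ Ioc (0 : ℝ) 1) (hy : y ∈ Ioc (0 : ℝ) 1) :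
    graphonOfGraph G x y = if G.Adj (cell n x) (cell n y) then 1 else 0 := by
  simp only [graphonOfGraph, ceil_mul_eq_iff_cell_eq hx, ceil_mul_eq_iff_cell_eq hy]
  congr! 1
  exact ⟨fun ⟨_, _, h, hi, hj⟩ => hi ▸ hj ▸ h, fun h => ⟨_, _, h, rfl, rfl⟩⟩

theorem cubeMeasure_real_cell_eq_cell {ι : Type*} [Fintype ι] {i j : ι} (hij : i ≠ j) :
    (cubeMeasure ι).real {x | cell n (x i) = cell n (x j)} = 1 / n := by
  have hn : (n : ℝ) ≠ 0 := NeZero.ne _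
  have hD : MeasurableSet {p : ℝ × ℝ | cell n p.1 = cell n p.2} :=
    measurableSet_eq_fun (measurable_cell.comp measurable_fst) (measurable_cell.comp measurable_snd)
  calc (cubeMeasure ι).real {x | cell n (x i) = cell n (x j)}
      = (unitMeasure.prod unitMeasure).real {p | cell n p.1 = cell n p.2} :=
        (measurePreserving_eval_prodMk hij).measureReal_preimage hD.nullMeasurableSet
    _ = ∫ x, ∫ y, if cell n x = cell n y then (1 : ℝ) else 0 ∂unitMeasure ∂unitMeasure := by
        rw [← integral_indicator_one hD, integral_prod _ ((integrable_const _).indicator hD)]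
        simp only [indicator_apply, mem_ofPred_eq, Pi.one_apply]
    _ = 1 / n := by
        rw [integral_integral_cell _ _ fun u v : Fin n => if u = v then (1 : ℝ) else 0]
        simp only [unitMeasure_real_preimage_cell, mul_ite, mul_one, mul_zero,
          Finset.sum_ite_eq, Finset.mem_univ, if_true, Finset.sum_const, Finset.card_univ,
          Fintype.card_fin, nsmul_eq_mul]
        field_simp

end Cells

section Collision

variable {k n : ℕ} [NeZero n] {F : SimpleGraph (Fin k)} {G : SimpleGraph (Fin n)}

theorem exists_cell_eq_cell_of_pairProd_ne_zero (hFG : ¬ F.IsIndContained G) {x : Fin k → ℝ}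
    (hx : ∀ i, x i ∈ Ioc (0 : ℝ) 1)
    (h : pairProd (increasingPairs k) (inducedKernel F (graphonOfGraph G)) x ≠ 0) :
    ∃ e ∈ increasingPairs k, cell n (x e.1) = cell n (x e.2) := by
  classical
  by_contra! hne
  have hinj : (fun i => cell n (x i)).Injective := by
    refine Function.injective_iff_pairwise_ne.2 fun i j hij => ?_
    rcases hij.lt_or_gt with hij | hij
    · exact hne (i, j) (mem_increasingPairs.2 hij)
    · exact (hne (j, i) (mem_increasingPairs.2 hij)).symm
  have hadj : ∀ i j, i < j → (G.Adj (cell n (x i)) (cell n (x j)) ↔ F.Adj i j) :=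
    fun i j hij => by
      have hker := Finset.prod_ne_zero_iff.1 h (i, j) (mem_increasingPairs.2 hij)
      rw [inducedKernel, graphonOfGraph_eq_cell G (hx i) (hx j)] at hker
      split_ifs at hker with hF hG hG <;> simp_all
  refine hFG ⟨⟨fun i => cell n (x i), hinj⟩, fun {i j} => ?_⟩
  rcases lt_trichotomy i j with hij | rfl | hij
  · exact hadj i j hij
  · simp
  · rw [G.adj_comm, F.adj_comm]
    exact hadj j i hij

theorem inducedDensity_graphonOfGraph_le (hFG : ¬ F.IsIndContained G) :
    inducedDensity F (graphonOfGraph G) ≤ k ^ 2 / n := by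
  let D : Fin k × Fin k → Set (Fin k → ℝ) := fun e => {x | cell n (x e.1) = cell n (x e.2)}
  have hD : ∀ e, MeasurableSet (D e) := fun e =>
    measurableSet_eq_fun (measurable_cell.comp (measurable_pi_apply _))
      (measurable_cell.comp (measurable_pi_apply _))
  have hint : ∀ e, Integrable ((D e).indicator 1) (cubeMeasure (Fin k)) := fun e =>
    (integrable_const (1 : ℝ)).indicator (hD e)
  have hK := isGraphon_inducedKernel F (isGraphon_graphonOfGraph G)
  have hpointwise : ∀ᵐ x ∂cubeMeasure (Fin k),
      pairProd (increasingPairs k) (inducedKernel F (graphonOfGraph G)) x ≤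
        ∑ e ∈ increasingPairs k, (D e).indicator 1 x := by
    filter_upwards [ae_cubeMeasure_mem_Ioc (Fin k)] with x hx
    have hnonneg : ∀ e ∈ increasingPairs k, 0 ≤ (D e).indicator (1 : (Fin k → ℝ) → ℝ) x :=
      fun e _ => indicator_nonneg (fun _ _ => zero_le_one) x
    by_cases h0 : pairProd (increasingPairs k) (inducedKernel F (graphonOfGraph G)) x = 0
    · exact h0 ▸ Finset.sum_nonneg hnonneg
    obtain ⟨e, he, hcell⟩ := exists_cell_eq_cell_of_pairProd_ne_zero hFG hx h0
    calc _ ≤ (1 : ℝ) := (pairProd_mem_Icc _ hK x).2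
      _ = (D e).indicator 1 x := by rw [indicator_of_mem (show x ∈ D e from hcell), Pi.one_apply]
      _ ≤ _ := Finset.single_le_sum hnonneg he
  calc inducedDensity F (graphonOfGraph G)
      ≤ ∫ x, ∑ e ∈ increasingPairs k, (D e).indicator 1 x ∂cubeMeasure (Fin k) := by
        rw [inducedDensity_eq_integral_pairProd]
        exact integral_mono_ae (integrable_pairProd _ hK)
          (integrable_finsetSum _ fun e _ => hint e) hpointwise
    _ = ∑ e ∈ increasingPairs k, 1 / (n : ℝ) := by
        rw [integral_finsetSum _ fun e _ => hint e]
        refine Finset.sum_congr rfl fun e he => ?_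
        rw [integral_indicator_one (hD e),
          cubeMeasure_real_cell_eq_cell (mem_increasingPairs.1 he).ne]
    _ ≤ k ^ 2 / n := by
        rw [Finset.sum_const, nsmul_eq_mul, mul_one_div]
        gcongr
        exact_mod_cast card_increasingPairs_le k

end Collision

section Sampling

/-- A graph on any vertex type belongs to the class `Q` if all its finite induced subgraphs,
labelled in any way, do; this frees hereditary classes from the vertex sets `{1, …, n}`. -/
def GraphClass.Contains (Q : GraphClass) {V : Type*} (F : SimpleGraph V) : Prop :=
  ∀ ⦃n : ℕ⦄ ⦃H : SimpleGraph (Fin n)⦄, H.IsIndContained F → H ∈ Q n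

variable {Q : GraphClass} {V V' : Type*} {F : SimpleGraph V} {F' : SimpleGraph V'}

theorem GraphClass.Contains.mono (hF : Q.Contains F) (h : F'.IsIndContained F) :
    Q.Contains F' := fun _ _ hH => hF (hH.trans h)

theorem IsHereditary.contains (hQ : IsHereditary Q) {n : ℕ} {G : SimpleGraph (Fin n)}
    (hG : G ∈ Q n) : Q.Contains G := by
  rintro m H ⟨φ⟩
  let s : Finset (Fin n) := Finset.univ.map φ.toEmbedding
  have hs : s.card = m := by rw [Finset.card_map, Finset.card_fin]
  have hφ_mem : ∀ i, φ i ∈ s := fun i => Finset.mem_map_of_mem _ (Finset.mem_univ i)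
  let π : Fin m → Fin m := fun i => (s.orderIsoOfFin hs).symm ⟨φ i, hφ_mem i⟩
  have hπ : ∀ i, s.orderEmbOfFin hs (π i) = φ i := fun i => by
    simp only [π, ← Finset.coe_orderIsoOfFin_apply, OrderIso.apply_symm_apply]
  have hπ_inj : π.Injective := fun i j hij => φ.injective <| by rw [← hπ, ← hπ, hij]
  have hmem := hQ.1 m (.ofBijective π (Finite.injective_iff_bijective.1 hπ_inj)) _
    (hQ.2 m n _ (s.orderEmbOfFin hs).strictMono G hG)
  rw [SimpleGraph.comap_comap] at hmem
  convert hmem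
  ext i j
  simp only [SimpleGraph.comap_adj, Function.comp_apply, Equiv.ofBijective_apply, hπ,
    φ.map_adj_iff]

theorem IsHereditary.contains_of_inducedDensity_pos (hQ : IsHereditary Q) {W : ℝ → ℝ → ℝ}
    (hW : W ∈ limitSet Q) {k : ℕ} {F : SimpleGraph (Fin k)} (hF : 0 < inducedDensity F W) :
    Q.Contains F := by
  obtain ⟨hW, n, G, hGQ, hn, hG⟩ := hW
  by_contra hFQ
  have hfree : ∀ a, ¬ F.IsIndContained (G a) := fun a h => hFQ ((hQ.contains (hGQ a)).mono h)
  have hle : ∀ᶠ a in atTop, inducedDensity F (graphonOfGraph (G a)) ≤ k ^ 2 / n a := by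
    filter_upwards [hn.eventually_gt_atTop 0] with a ha
    have : NeZero (n a) := ⟨ha.ne'⟩
    exact inducedDensity_graphonOfGraph_le (hfree a)
  have hlim := hW.tendsto_inducedDensity F (fun a => isGraphon_graphonOfGraph (G a)) hG
  exact hF.not_ge (le_of_tendsto_of_tendsto hlim
    ((tendsto_const_nhds.div_atTop tendsto_natCast_atTop_atTop).comp hn) hle)

/-- `F` arises with positive probability when each pair of the points `x` is joined, independently,
with the probability prescribed by `W`. -/
def IsPossibleSample (F : SimpleGraph V) (W : ℝ → ℝ → ℝ) (x : V → ℝ) : Prop :=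
  ∀ i j, i ≠ j → 0 < inducedKernel F W (i, j) (x i) (x j)

theorem IsHereditary.ae_contains_of_isPossibleSample_fin (hQ : IsHereditary Q) {W : ℝ → ℝ → ℝ}
    (hW : W ∈ limitSet Q) (k : ℕ) :
    ∀ᵐ x ∂cubeMeasure (Fin k), ∀ F, IsPossibleSample F W x → Q.Contains F := by
  refine ae_all_iff.2 fun F => ?_
  by_cases hF : Q.Contains F
  · exact .of_forall fun _ _ => hF
  have hK := isGraphon_inducedKernel F hW.1
  have hnonneg : 0 ≤ pairProd (increasingPairs k) (inducedKernel F W) := fun x =>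
    (pairProd_mem_Icc _ hK x).1
  have hzero : ∫ x, pairProd (increasingPairs k) (inducedKernel F W) x ∂cubeMeasure (Fin k) = 0 :=
    le_antisymm (not_lt.1 fun hpos => hF <| hQ.contains_of_inducedDensity_pos hW <| by
      rwa [inducedDensity_eq_integral_pairProd]) (integral_nonneg hnonneg)
  filter_upwards [(integral_eq_zero_iff_of_nonneg hnonneg (integrable_pairProd _ hK)).1 hzero]
    with x hx hsample
  exact absurd hx (Finset.prod_pos fun e he => hsample _ _ (mem_increasingPairs.1 he).ne).ne'

theorem IsHereditary.ae_contains_of_isPossibleSample (hQ : IsHereditary Q) {W : ℝ → ℝ → ℝ}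
    (hW : W ∈ limitSet Q) (V : Type*) [Fintype V] :
    ∀ᵐ x ∂cubeMeasure V, ∀ F : SimpleGraph V, IsPossibleSample F W x → Q.Contains F := by
  let e := Fintype.equivFin V
  filter_upwards [(measurePreserving_comp_injective (ν := unitMeasure)
    e.symm.injective).quasiMeasurePreserving.ae
      (hQ.ae_contains_of_isPossibleSample_fin hW (Fintype.card V))] with x hx F hF
  exact (hx (F.comap e.symm) fun i j hij => hF _ _ (e.symm.injective.ne hij)).mono
    ⟨(SimpleGraph.Iso.comap e.symm F).symm.toEmbedding⟩

end Sampling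

section RandSupport

variable {ι : Type*} {W : ℝ → ℝ → ℝ}

/-- The graph on the points `x` whose edges are the pairs in the randomness support of `W`. -/
def randSupportGraph (W : ℝ → ℝ → ℝ) (x : ι → ℝ) : SimpleGraph ι :=
  .fromRel fun i j => W (x i) (x j) ∈ Ioo (0 : ℝ) 1

theorem IsGraphon.randSupportGraph_adj (hW : IsGraphon W) {x : ι → ℝ} {i j : ι} :
    (randSupportGraph W x).Adj i j ↔ i ≠ j ∧ W (x i) (x j) ∈ Ioo (0 : ℝ) 1 := by
  rw [randSupportGraph, SimpleGraph.fromRel_adj, hW.symm (x j), or_self]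

theorem IsGraphon.randSupportGraph_eq_top_iff (hW : IsGraphon W) {x : ι → ℝ} :
    randSupportGraph W x = ⊤ ↔ ∀ i j, i ≠ j → W (x i) (x j) ∈ Ioo (0 : ℝ) 1 := by
  simp only [SimpleGraph.ext_iff, funext_iff, eq_iff_iff, hW.randSupportGraph_adj,
    SimpleGraph.top_adj, and_iff_left_iff_imp]

theorem IsGraphon.measurableSet_randSupportGraph_eq_top [Countable ι] (hW : IsGraphon W) :
    MeasurableSet {x : ι → ℝ | randSupportGraph W x = ⊤} := by
  simp only [hW.randSupportGraph_eq_top_iff, ofPred_forall]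
  exact .iInter fun i => .iInter fun j => .iInter fun _ =>
    hW.measurable_eval i j measurableSet_Ioo

theorem IsGraphon.kFree_randIndicator_iff (hW : IsGraphon W) {r : ℕ} :
    KFree r (randIndicator W) ↔ ∀ᵐ x ∂cubeMeasure (Fin r), randSupportGraph W x ≠ ⊤ := by
  rw [KFree, restrict_univ_pi_Icc]
  refine eventually_congr (.of_forall fun x => not_iff_not.1 ?_)
  rw [not_ne_iff, hW.randSupportGraph_eq_top_iff, ← ne_eq]
  simp only [Finset.prod_ne_zero_iff, Finset.mem_univ, true_implies, randIndicator]
  refine ⟨fun h i j hij => ?_, fun h i j => ?_⟩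
  · have hlt : ∀ {i j}, i < j → W (x i) (x j) ∈ Ioo (0 : ℝ) 1 := fun {i j} hij => by
      simpa [hij] using h i j
    rcases hij.lt_or_gt with hij | hij
    · exact hlt hij
    · exact hW.symm _ _ ▸ hlt hij
  · split_ifs with hij hmem
    · exact one_ne_zero
    · exact absurd (h i j hij.ne) hmem
    · exact one_ne_zero

theorem IsGraphon.exists_forall_selection_randSupportGraph_eq_top (hW : IsGraphon W) {r : ℕ}
    (hK : ¬ KFree r (randIndicator W)) (κ : Type*) [Fintype κ] :
    ∃ᶠ x in ae (cubeMeasure (Fin r × κ)),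
      ∀ f : Fin r → κ, randSupportGraph W (fun i => x (i, f i)) = ⊤ := by
  rw [hW.kFree_randIndicator_iff] at hK
  refine fun hx => hK (ae_of_ae_pi_exists_selection (κ := κ)
    hW.measurableSet_randSupportGraph_eq_top.compl ?_)
  exact (measurePreserving_uncurry.quasiMeasurePreserving.ae hx).mono fun x hx => not_forall.1 hx

/-- `Q` contains every graph on `ι × κ` whose restriction to the part `{i} × κ` is `A i` for all
`i`, whatever its edges between different parts. -/
def GraphClass.ContainsParts (Q : GraphClass) {ι κ : Type*} (A : ι → SimpleGraph κ) : Prop :=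
  ∀ F : SimpleGraph (ι × κ), (∀ i, F.comap (Prod.mk i) = A i) → Q.Contains F

/-- Across different parts every edge is undecided, so only the edges inside the parts are forced
on a sample. -/
theorem IsHereditary.exists_containsParts {Q : GraphClass} (hQ : IsHereditary Q)
    (hW : W ∈ limitSet Q) {r : ℕ} (hK : ¬ KFree r (randIndicator W)) (κ : Type*) [Finite κ] :
    ∃ A : Fin r → SimpleGraph κ, Q.ContainsParts A := by
  classical
  have := Fintype.ofFinite κ
  have hgr := hW.1
  obtain ⟨x, hsupp, hsample⟩ := ((hgr.exists_forall_selection_randSupportGraph_eq_top hK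
    κ).and_eventually (hQ.ae_contains_of_isPossibleSample hW (Fin r × κ))).exists
  refine ⟨fun i => .fromRel fun a b => 0 < W (x (i, a)) (x (i, b)), fun F hF => hsample F ?_⟩
  rintro ⟨i, a⟩ ⟨j, b⟩ hne
  rcases eq_or_ne i j with rfl | hij
  · have hadj : F.Adj (i, a) (i, b) ↔ 0 < W (x (i, a)) (x (i, b)) := by
      rw [← SimpleGraph.comap_adj (f := Prod.mk i), hF, SimpleGraph.fromRel_adj,
        hgr.symm (x (i, b)), or_self, and_iff_right (ne_of_apply_ne _ hne)]
    by_cases h : F.Adj (i, a) (i, b)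
    · rw [inducedKernel_of_adj h]
      exact hadj.1 h
    · rw [inducedKernel_of_not_adj h]
      linarith [not_lt.1 (mt hadj.2 h)]
  · have hmem := hgr.randSupportGraph_eq_top_iff.1
      (hsupp (Function.update (fun _ => b) i a)) i j hij
    rw [Function.update_self, Function.update_of_ne hij.symm] at hmem
    rw [inducedKernel]
    split_ifs
    · exact hmem.1
    · exact sub_pos.2 hmem.2

end RandSupport

section Ramsey

theorem card_lt_choose_of_cliqueFreeOn {V : Type*} {G : SimpleGraph V} (a b : ℕ) {S : Finset V}
    (hG : G.CliqueFreeOn S (a + 1)) (hGc : Gᶜ.CliqueFreeOn S (b + 1)) :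
    S.card < (a + b).choose a := by
  classical
  rcases S.eq_empty_or_nonempty with rfl | ⟨v, hv⟩
  · exact Nat.choose_pos (Nat.le_add_right a b)
  have hone : ∀ H : SimpleGraph V, ¬ H.CliqueFreeOn S 1 := fun H h =>
    lt_irrefl 1 <| H.cliqueFreeOn_singleton.1 <|
      h.subset _ (singleton_subset_iff.2 (Finset.mem_coe.2 hv))
  match a, b with
  | 0, _ => exact absurd hG (hone G)
  | _, 0 => exact absurd hGc (hone Gᶜ)
  | a + 1, b + 1 =>
    have hadj : (S.filter (G.Adj v)).card < (a + (b + 1)).choose a :=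
      card_lt_choose_of_cliqueFreeOn a (b + 1)
        ((hG.of_succ _ hv).subset _ (Finset.coe_filter ..).subset)
        (hGc.subset _ (Finset.filter_subset _ S))
    have hnonadj : (S.filter (Gᶜ.Adj v)).card < (a + 1 + b).choose (a + 1) :=
      card_lt_choose_of_cliqueFreeOn (a + 1) b (hG.subset _ (Finset.filter_subset _ S))
        ((hGc.of_succ _ hv).subset _ (Finset.coe_filter ..).subset)
    have hcover : S ⊆ insert v (S.filter (G.Adj v) ∪ S.filter (Gᶜ.Adj v)) := fun w hw => by
      simp only [Finset.mem_insert, Finset.mem_union, Finset.mem_filter, SimpleGraph.compl_adj]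
      tauto
    have hcard := (Finset.card_le_card hcover).trans <| (Finset.card_insert_le _ _).trans <|
      Nat.add_le_add_right (Finset.card_union_le _ _) 1
    have hpascal : (a + 1 + (b + 1)).choose (a + 1)
        = (a + (b + 1)).choose a + (a + 1 + b).choose (a + 1) := by
      rw [Nat.add_right_comm a 1 b, Nat.add_assoc a b 1, Nat.add_right_comm a 1 (b + 1),
        Nat.choose_succ_succ']
    lia

theorem exists_top_or_bot_isIndContained (n : ℕ) :
    ∃ m, ∀ G : SimpleGraph (Fin m),
      (⊤ : SimpleGraph (Fin n)).IsIndContained G ∨ (⊥ : SimpleGraph (Fin n)).IsIndContained G := by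
  refine ⟨(n + n).choose n, fun G => ?_⟩
  have hfree : ∀ {H : SimpleGraph (Fin ((n + n).choose n))},
      ¬ (⊤ : SimpleGraph (Fin n)).IsIndContained H →
        H.CliqueFreeOn (Finset.univ : Finset (Fin ((n + n).choose n))) (n + 1) := fun {H} h => by
    have hH : H.CliqueFree n :=
      not_not.1 fun hn => h ⟨SimpleGraph.topEmbeddingOfNotCliqueFree hn⟩
    exact (hH.mono n.le_succ).cliqueFreeOn _
  by_contra! hno
  rw [← SimpleGraph.compl_isIndContained_compl (G := ⊥), compl_bot] at hno
  exact (card_lt_choose_of_cliqueFreeOn n n (hfree hno.1) (hfree hno.2)).ne (Finset.card_fin _)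

end Ramsey

section Parts

variable {Q : GraphClass} {ι ι' κ κ' : Type*}

theorem GraphClass.ContainsParts.comap {A : ι → SimpleGraph κ} (hA : Q.ContainsParts A)
    (e : ι' ↪ ι) (f : ι' → κ' ↪ κ) : Q.ContainsParts fun i => (A (e i)).comap (f i) := by
  intro F hF
  let g : ι' × κ' ↪ ι × κ := ⟨fun p => (e p.1, f p.1 p.2), fun p q hpq => by
    obtain ⟨h1, h2⟩ := Prod.mk.inj hpq
    obtain h1 := e.injective h1
    exact Prod.ext h1 ((f q.1).injective (h1 ▸ h2))⟩
  let E : SimpleGraph (ι × κ) := F.map g ⊔ ⨆ i, (A i).map (Function.Embedding.sectR i κ)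
  have hFA : ∀ {i a b}, F.Adj (i, a) (i, b) ↔ (A (e i)).Adj (f i a) (f i b) := fun {i a b} =>
    iff_of_eq (congrArg (·.Adj a b) (hF i))
  have hE : ∀ i, E.comap (Prod.mk i) = A i := fun i => by
    ext a b
    simp only [E, SimpleGraph.comap_adj, SimpleGraph.sup_adj, SimpleGraph.iSup_adj,
      SimpleGraph.map_adj]
    constructor
    · rintro (⟨⟨j, a⟩, ⟨k, b⟩, hadj, ha, hb⟩ | ⟨j, a, b, hadj, ha, hb⟩)
      · obtain ⟨rfl, rfl⟩ := Prod.mk.inj ha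
        obtain ⟨hkj, rfl⟩ := Prod.mk.inj hb
        obtain rfl := e.injective hkj
        exact hFA.1 hadj
      · obtain ⟨rfl, rfl⟩ := Prod.mk.inj ha
        obtain ⟨-, rfl⟩ := Prod.mk.inj hb
        exact hadj
    · exact fun h => .inr ⟨i, a, b, h, rfl, rfl⟩
  have hEF : E.comap g = F := by
    refine le_antisymm ?_ ((SimpleGraph.map_le_iff_le_comap g F E).1 le_sup_left)
    rintro ⟨i, a⟩ ⟨j, b⟩ (hadj | hadj)
    · exact SimpleGraph.map_adj_apply.1 hadj
    simp only [SimpleGraph.iSup_adj, SimpleGraph.map_adj] at hadj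
    obtain ⟨k, a', b', hadj, ha, hb⟩ := hadj
    obtain ⟨rfl, rfl⟩ := Prod.mk.inj ha
    obtain ⟨hkj, rfl⟩ := Prod.mk.inj hb
    obtain rfl := e.injective hkj
    exact hFA.2 hadj
  exact (hA E hE).mono (SimpleGraph.isIndContained_iff_exists_comap_eq.2 ⟨g, hEF⟩)

theorem GraphClass.exists_containsParts_ite
    (h : ∀ m, ∃ A : ι → SimpleGraph (Fin m), Q.ContainsParts A) (n : ℕ) :
    ∃ τ : ι → Bool, Q.ContainsParts fun i => if τ i then ⊤ else (⊥ : SimpleGraph (Fin n)) := by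
  classical
  obtain ⟨m, hm⟩ := exists_top_or_bot_isIndContained n
  obtain ⟨A, hA⟩ := h m
  have hind : ∀ i, ∃ (t : Bool) (f : Fin n ↪ Fin m), (A i).comap f = if t then ⊤ else ⊥ :=
    fun i => by
      simp only [SimpleGraph.isIndContained_iff_exists_comap_eq] at hm
      exact (hm (A i)).elim (fun h => ⟨true, h⟩) (fun h => ⟨false, h⟩)
  choose τ f hf using hind
  have hτ := hA.comap (Function.Embedding.refl ι) f
  simp only [Function.Embedding.refl_apply, hf] at hτ
  exact ⟨τ, hτ⟩

theorem GraphClass.exists_forall_containsParts_ite [Finite ι]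
    (h : ∀ m, ∃ A : ι → SimpleGraph (Fin m), Q.ContainsParts A) :
    ∃ τ : ι → Bool, ∀ n,
      Q.ContainsParts fun i => if τ i then ⊤ else (⊥ : SimpleGraph (Fin n)) := by
  classical
  have := Fintype.ofFinite ι
  by_contra! hno
  choose N hN using hno
  obtain ⟨τ, hτ⟩ := GraphClass.exists_containsParts_ite h (∑ τ, N τ)
  have hle : N τ ≤ ∑ τ, N τ := Finset.single_le_sum (fun _ _ => Nat.zero_le _) (Finset.mem_univ τ)
  refine hN τ ?_
  have hcomap := hτ.comap (Function.Embedding.refl ι) fun _ => Fin.castLEEmb hle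
  convert hcomap using 2 with i
  rw [Function.Embedding.refl_apply]
  split_ifs
  · exact (SimpleGraph.comap_top (Fin.castLEEmb hle).injective).symm
  · exact (SimpleGraph.comap_bot _).symm

theorem exists_perm_iff_val_lt {r : ℕ} (p : Fin r → Prop) :
    ∃ s ≤ r, ∃ σ : Equiv.Perm (Fin r), ∀ i, p (σ i) ↔ (i : ℕ) < s := by
  classical
  let s := Fintype.card {i // p i}
  have hs : s ≤ r := (Fintype.card_subtype_le p).trans_eq (Fintype.card_fin r)
  have hcard : Fintype.card {i : Fin r // (i : ℕ) < s} = Fintype.card {i // p i} := by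
    rw [Fintype.card_subtype, Fin.card_filter_val_lt, min_eq_right hs]
  let σ := (Fintype.equivOfCardEq hcard).extendSubtype
  exact ⟨s, hs, σ, fun i => ⟨fun h => not_not.1 fun hi =>
    (Fintype.equivOfCardEq hcard).extendSubtype_not_mem i hi h,
    (Fintype.equivOfCardEq hcard).extendSubtype_mem i⟩⟩

theorem GraphClass.exists_forall_containsParts_val_lt {r : ℕ}
    (h : ∀ m, ∃ A : Fin r → SimpleGraph (Fin m), Q.ContainsParts A) :
    ∃ s ≤ r, ∀ n, Q.ContainsParts
      fun i : Fin r => if (i : ℕ) < s then ⊤ else (⊥ : SimpleGraph (Fin n)) := by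
  obtain ⟨τ, hτ⟩ := GraphClass.exists_forall_containsParts_ite h
  obtain ⟨s, hs, σ, hσ⟩ := exists_perm_iff_val_lt fun i => τ i = true
  refine ⟨s, hs, fun n => ?_⟩
  have hcomap := (hτ n).comap σ.toEmbedding fun _ => Function.Embedding.refl (Fin n)
  simpa only [Equiv.coe_toEmbedding, hσ, Function.Embedding.coe_refl, SimpleGraph.comap_id]
    using hcomap

end Parts

section Hadamard

open scoped Matrix Kronecker

theorem exists_isHadamard_isSymm (k : ℕ) :
    ∃ H : Matrix (Fin (2 ^ k)) (Fin (2 ^ k)) ℝ, H.IsHadamard ∧ H.IsSymm := by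
  induction k with
  | zero =>
    have : Subsingleton (Fin (2 ^ 0)) := inferInstanceAs (Subsingleton (Fin 1))
    refine ⟨1, ⟨fun i j => ?_, ?_, ?_⟩, Matrix.transpose_one⟩
    · rw [Subsingleton.elim i j, Matrix.one_apply_eq]
      exact one_mem _
    all_goals simp
  | succ k ih =>
    obtain ⟨H, hH, hHsymm⟩ := ih
    let B : Matrix (Fin 2) (Fin 2) ℝ := !![1, 1; 1, -1]
    have hB : B.IsHadamard := by
      refine ⟨fun i j => ?_, ?_, ?_⟩
      · fin_cases i <;> fin_cases j <;> simp [B, Unitary.mem_iff]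
      all_goals ext i j; fin_cases i <;> fin_cases j <;> norm_num [B, Matrix.mul_apply]
    have hBsymm : B.IsSymm := by
      ext i j
      fin_cases i <;> fin_cases j <;> rfl
    have hkron : (H ⊗ₖ B).IsSymm := by
      rw [Matrix.IsSymm, ← Matrix.kroneckerMap_transpose, hHsymm.eq, hBsymm.eq]
    exact ⟨_, (hH.kronecker hB).reindex finProdFinEquiv finProdFinEquiv,
      hkron.reindex finProdFinEquiv⟩

variable {κ : Type*} [Fintype κ] [DecidableEq κ] {H : Matrix κ κ ℝ}

/-- Lindsey's lemma. -/
theorem sq_dotProduct_mulVec_le_of_isHadamard (hH : H.IsHadamard) (s t : κ → ℝ) :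
    (s ⬝ᵥ H *ᵥ t) ^ 2 ≤ Fintype.card κ * (s ⬝ᵥ s) * (t ⬝ᵥ t) := by
  have hnorm : H *ᵥ t ⬝ᵥ H *ᵥ t = Fintype.card κ * (t ⬝ᵥ t) := by
    have hHH : Hᵀ * H = (Fintype.card κ : ℝ) • 1 := by
      rw [← H.conjTranspose_eq_transpose_of_trivial, hH.conjTranspose_mul]
    rw [Matrix.dotProduct_mulVec, ← Matrix.mulVec_transpose, Matrix.mulVec_mulVec, hHH,
      Matrix.smul_mulVec, Matrix.one_mulVec, smul_dotProduct, smul_eq_mul]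
  calc (s ⬝ᵥ H *ᵥ t) ^ 2 ≤ (s ⬝ᵥ s) * (H *ᵥ t ⬝ᵥ H *ᵥ t) := by
        simpa only [dotProduct, ← sq] using Finset.sum_mul_sq_le_sq_mul_sq Finset.univ s (H *ᵥ t)
    _ = Fintype.card κ * (s ⬝ᵥ s) * (t ⬝ᵥ t) := by rw [hnorm]; ring

theorem abs_dotProduct_mulVec_le_of_isHadamard (hH : H.IsHadamard) {δ : ℝ} {s t : κ → ℝ}
    (hs : ∀ a, s a ∈ Icc 0 δ) (ht : ∀ a, t a ∈ Icc 0 δ) :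
    |s ⬝ᵥ H *ᵥ t| ≤ Fintype.card κ * √(Fintype.card κ) * δ ^ 2 := by
  have hsq : ∀ {v : κ → ℝ}, (∀ a, v a ∈ Icc 0 δ) → v ⬝ᵥ v ≤ Fintype.card κ * δ ^ 2 :=
    fun {v} hv => by
      refine (Finset.sum_le_card_nsmul _ _ (δ ^ 2) fun a _ => ?_).trans_eq (nsmul_eq_mul _ _)
      rw [← sq]
      exact pow_le_pow_left₀ (hv a).1 (hv a).2 2
  refine abs_le_of_sq_le_sq ?_ (by positivity)
  calc (s ⬝ᵥ H *ᵥ t) ^ 2 ≤ Fintype.card κ * (s ⬝ᵥ s) * (t ⬝ᵥ t) :=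
        sq_dotProduct_mulVec_le_of_isHadamard hH s t
    _ ≤ Fintype.card κ * (Fintype.card κ * δ ^ 2) * (Fintype.card κ * δ ^ 2) := by
        gcongr
        · exact dotProduct_self_star_nonneg t
        · exact hsq hs
        · exact hsq ht
    _ = (Fintype.card κ * √(Fintype.card κ) * δ ^ 2) ^ 2 := by
        rw [mul_pow, mul_pow, Real.sq_sqrt (Nat.cast_nonneg _)]
        ring

end Hadamard

section StepFunctions

theorem divNat_cell {r n : ℕ} [NeZero r] [NeZero n] {x : ℝ} (hx : x ∈ Ioc (0 : ℝ) 1) :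
    (cell (r * n) x).divNat = cell r x := by
  set u := cell (r * n) x with hu
  have hr : (0 : ℝ) < r := by exact_mod_cast NeZero.pos r
  have hn : (0 : ℝ) < n := by exact_mod_cast NeZero.pos n
  have hlower : ((u.divNat : ℕ) : ℝ) * n ≤ (u : ℕ) := by
    exact_mod_cast Nat.div_mul_le_self u n
  have hupper : ((u : ℕ) : ℝ) + 1 ≤ ((u.divNat : ℕ) + 1) * n := by
    exact_mod_cast Nat.lt_mul_of_div_lt (Nat.lt_succ_self _) (NeZero.pos n)
  refine ((mem_Ioc_div_iff_cell_eq hx).1 (Ioc_subset_Ioc ?_ ?_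
    ((mem_Ioc_div_iff_cell_eq hx).2 hu.symm))).symm <;> push_cast
  · rw [div_le_div_iff₀ hr (by positivity)]
    nlinarith
  · rw [div_le_div_iff₀ (by positivity) hr]
    nlinarith

theorem cutNorm_le_of_eq_cell {n : ℕ} [NeZero n] {U : ℝ → ℝ → ℝ} {c : Fin n → Fin n → ℝ}
    (hU : ∀ x ∈ Ioc (0 : ℝ) 1, ∀ y ∈ Ioc (0 : ℝ) 1, U x y = c (cell n x) (cell n y)) {ε : ℝ}
    (hc : ∀ s t : Fin n → ℝ, (∀ u, s u ∈ Icc (0 : ℝ) (1 / n)) →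
      (∀ u, t u ∈ Icc (0 : ℝ) (1 / n)) → |∑ u, ∑ v, s u * t v * c u v| ≤ ε) :
    cutNorm U ≤ ε := by
  refine csSup_le ⟨_, ∅, ∅, .empty, .empty, empty_subset _, empty_subset _, rfl⟩ ?_
  rintro _ ⟨S, T, hS, hT, hS1, hT1, rfl⟩
  have hcell_eq : ∀ᵐ q ∂(unitMeasure.restrict S).prod (unitMeasure.restrict T),
      U q.1 q.2 = c (cell n q.1) (cell n q.2) := by
    filter_upwards
      [Measure.quasiMeasurePreserving_fst.ae (ae_restrict_of_ae ae_unitMeasure_mem_Ioc),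
        Measure.quasiMeasurePreserving_snd.ae (ae_restrict_of_ae ae_unitMeasure_mem_Ioc)]
      with q h1 h2
    exact hU _ h1 _ h2
  have hint : Integrable (fun q : ℝ × ℝ => c (cell n q.1) (cell n q.2))
      ((unitMeasure.restrict S).prod (unitMeasure.restrict T)) :=
    (Integrable.of_finite (f := Function.uncurry c)).comp_measurable
      (measurable_cell.prodMap measurable_cell)
  have hmeas : ∀ (S : Set ℝ) (u : Fin n),
      (unitMeasure.restrict S).real (cell n ⁻¹' {u}) ∈ Icc (0 : ℝ) (1 / n) := fun S u =>
    ⟨measureReal_nonneg, (ENNReal.toReal_mono (measure_ne_top _ _)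
      (Measure.restrict_apply_le _ _)).trans_eq (unitMeasure_real_preimage_cell u)⟩
  have hrestrict := unitMeasure_restrict_prod_restrict hS hT
  rw [inter_eq_left.2 hS1, inter_eq_left.2 hT1] at hrestrict
  rw [← hrestrict, integral_congr_ae hcell_eq, integral_prod _ hint, integral_integral_cell]
  exact hc _ _ (hmeas S) (hmeas T)

end StepFunctions

section Wrs

variable {r s : ℕ}

/-- The value of the graphon `W^{(r,s)}` on the block `I_i × I_j`. -/
def wrsBlock (s : ℕ) (i j : Fin r) : ℝ := if i = j then if (i : ℕ) < s then 1 else 0 else 1 / 2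

theorem Wrs_eq_cell [NeZero r] {x y : ℝ} (hx : x ∈ Ioc (0 : ℝ) 1) (hy : y ∈ Ioc (0 : ℝ) 1) :
    Wrs r s x y = wrsBlock s (cell r x) (cell r y) := by
  simp only [Wrs, mem_Ioc_div_iff_cell_eq hx, mem_Ioc_div_iff_cell_eq hy, wrsBlock]
  by_cases h : cell r x = cell r y <;> simp [h]

theorem isGraphon_Wrs [NeZero r] : IsGraphon (Wrs r s) := by
  classical
  refine cast (congrArg IsGraphon ?_) (isGraphon_ceil r (g := fun a b =>
    if ∃ i j : Fin r, i ≠ j ∧ a = (i : ℕ) + 1 ∧ b = (j : ℕ) + 1 then 1 / 2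
    else if ∃ i : Fin r, (i : ℕ) < s ∧ a = (i : ℕ) + 1 ∧ b = (i : ℕ) + 1 then 1 else 0) ?_ ?_)
  · ext x y
    simp only [Wrs, mem_Ioc_div_iff_ceil_mul_eq]
  · intro a b
    congr! 1
    · exact ⟨fun ⟨i, j, h, ha, hb⟩ => ⟨j, i, h.symm, hb, ha⟩,
        fun ⟨i, j, h, hb, ha⟩ => ⟨j, i, h.symm, ha, hb⟩⟩
    · simp only [and_comm]
  · intro a b
    beta_reduce
    split_ifs <;> norm_num

end Wrs

section SignBlowup

variable {ι κ : Type*}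

/-- The graph on `ι × κ` whose part `{i} × κ` is complete if `p i` and empty otherwise, and whose
edges between distinct parts are the positions of the entries `1` of the symmetric matrix `H`. -/
def signBlowup (H : Matrix κ κ ℝ) (p : ι → Prop) : SimpleGraph (ι × κ) :=
  .fromRel fun x y => (x.1 = y.1 ∧ p x.1) ∨ (x.1 ≠ y.1 ∧ H x.2 y.2 = 1)

theorem signBlowup_comap_mk (H : Matrix κ κ ℝ) (p : ι → Prop) [DecidablePred p] (i : ι) :
    (signBlowup H p).comap (Prod.mk i) = if p i then ⊤ else ⊥ := by
  ext a b
  split_ifs with hi <;> simp [signBlowup, hi]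

open Classical in
theorem signBlowup_adj_sub_wrsBlock [DecidableEq κ] {H : Matrix κ κ ℝ}
    (hH : ∀ a b, H a b = 1 ∨ H a b = -1) (hsymm : H.IsSymm) {r : ℕ} (s : ℕ) (x y : Fin r × κ) :
    (if (signBlowup H fun i : Fin r => (i : ℕ) < s).Adj x y then 1 else 0) - wrsBlock s x.1 y.1 =
      (if x.1 = y.1 then 0 else H x.2 y.2 / 2) - if x = y ∧ (x.1 : ℕ) < s then 1 else 0 := by
  obtain ⟨i, a⟩ := x
  obtain ⟨j, b⟩ := y
  have hab : H b a = H a b := hsymm.apply a b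
  rcases eq_or_ne i j with rfl | hij
  · by_cases hi : (i : ℕ) < s <;> by_cases h : a = b <;> simp [signBlowup, wrsBlock, hi, h]
  · rcases hH a b with h | h <;> norm_num [signBlowup, wrsBlock, hij, hij.symm, hab, h]

variable [Fintype ι] [Fintype κ] [DecidableEq ι] [DecidableEq κ] {δ : ℝ} {σ τ : ι × κ → ℝ}

open scoped Matrix in
theorem abs_sum_offBlock_le_of_isHadamard {H : Matrix κ κ ℝ} (hH : H.IsHadamard)
    (hσ : ∀ x, σ x ∈ Icc 0 δ) (hτ : ∀ x, τ x ∈ Icc 0 δ) :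
    |∑ x, ∑ y, σ x * τ y * (if x.1 = y.1 then 0 else H x.2 y.2 / 2)| ≤
      Fintype.card ι ^ 2 * (Fintype.card κ * √(Fintype.card κ) * δ ^ 2) := by
  set M : ℝ := Fintype.card κ * √(Fintype.card κ) * δ ^ 2
  have hM : 0 ≤ M := by positivity
  let b : ι → ι → ℝ := fun i j =>
    if i = j then 0 else ((fun a => σ (i, a)) ⬝ᵥ H *ᵥ fun a => τ (j, a)) / 2
  have hblocks : ∑ x, ∑ y, σ x * τ y * (if x.1 = y.1 then 0 else H x.2 y.2 / 2) =
      ∑ i, ∑ j, b i j := by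
    simp only [Fintype.sum_prod_type]
    refine Finset.sum_congr rfl fun i _ => Finset.sum_comm.trans ?_
    refine Finset.sum_congr rfl fun j _ => ?_
    by_cases hij : i = j
    · simp only [b, hij, if_true, mul_zero, Finset.sum_const_zero]
    · simp only [b, hij, if_false, dotProduct, Matrix.mulVec, Finset.mul_sum, Finset.sum_div]
      exact Finset.sum_congr rfl fun _ _ => Finset.sum_congr rfl fun _ _ => by ring
  have hb : ∀ i j, |b i j| ≤ M := fun i j => by
    have h := abs_dotProduct_mulVec_le_of_isHadamard hH (fun a => hσ (i, a)) (fun a => hτ (j, a))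
    by_cases hij : i = j
    · simpa only [b, hij, if_true, abs_zero] using hM
    · simp only [b, hij, if_false, abs_div, abs_two]
      linarith
  calc |∑ x, ∑ y, σ x * τ y * (if x.1 = y.1 then 0 else H x.2 y.2 / 2)|
      ≤ ∑ i, ∑ j, |b i j| := by
        rw [hblocks]
        exact (Finset.abs_sum_le_sum_abs _ _).trans
          (Finset.sum_le_sum fun i _ => Finset.abs_sum_le_sum_abs _ _)
    _ ≤ ∑ _i : ι, ∑ _j : ι, M := Finset.sum_le_sum fun i _ => Finset.sum_le_sum fun j _ => hb i j
    _ = Fintype.card ι ^ 2 * M := by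
        simp only [Finset.sum_const, Finset.card_univ, nsmul_eq_mul]
        ring

end SignBlowup

theorem abs_sum_diagonal_le {ι : Type*} [Fintype ι] [DecidableEq ι] (p : ι → Prop)
    [DecidablePred p] {δ : ℝ} {σ τ : ι → ℝ} (hσ : ∀ x, σ x ∈ Icc 0 δ) (hτ : ∀ x, τ x ∈ Icc 0 δ) :
    |∑ x, ∑ y, σ x * τ y * (if x = y ∧ p x then 1 else 0)| ≤ Fintype.card ι * δ ^ 2 := by
  have hterm : ∀ x, |∑ y, σ x * τ y * (if x = y ∧ p x then 1 else 0)| ≤ δ ^ 2 := fun x => by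
    simp only [ite_and, mul_ite, mul_one, mul_zero, Finset.sum_ite_eq, Finset.mem_univ, if_true]
    split_ifs
    · rw [abs_of_nonneg (mul_nonneg (hσ x).1 (hτ x).1), sq]
      exact mul_le_mul (hσ x).2 (hτ x).2 (hτ x).1 ((hσ x).1.trans (hσ x).2)
    · rw [abs_zero]
      positivity
  refine (Finset.abs_sum_le_sum_abs _ _).trans ((Finset.sum_le_sum fun x _ => hterm x).trans_eq ?_)
  rw [Finset.sum_const, Finset.card_univ, nsmul_eq_mul]

section WrsLimit

variable {r n s : ℕ} [NeZero r] [NeZero n]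

theorem abs_sum_discrepancy_le_of_isHadamard {H : Matrix (Fin n) (Fin n) ℝ} (hH : H.IsHadamard)
    (p : Fin r × Fin n → Prop) [DecidablePred p] {σ τ : Fin r × Fin n → ℝ}
    (hσ : ∀ x, σ x ∈ Icc (0 : ℝ) (1 / (r * n : ℕ)))
    (hτ : ∀ x, τ x ∈ Icc (0 : ℝ) (1 / (r * n : ℕ))) :
    |∑ x, ∑ y, σ x * τ y *
      ((if x.1 = y.1 then 0 else H x.2 y.2 / 2) - if x = y ∧ p x then 1 else 0)| ≤ 2 / √n := by
  have hr : (1 : ℝ) ≤ r := by exact_mod_cast NeZero.one_le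
  have hn : (1 : ℝ) ≤ n := by exact_mod_cast NeZero.one_le
  have hsqrt : √(n : ℝ) ≤ r * n :=
    Real.sqrt_le_iff.2 ⟨by positivity, by nlinarith [mul_le_mul hr hn zero_le_one (by positivity)]⟩
  simp only [mul_sub, Finset.sum_sub_distrib]
  refine (abs_sub _ _).trans ((add_le_add
    (abs_sum_offBlock_le_of_isHadamard hH hσ hτ) (abs_sum_diagonal_le p hσ hτ)).trans ?_)
  simp only [Fintype.card_prod, Fintype.card_fin, Nat.cast_mul]
  calc (r : ℝ) ^ 2 * (n * √n * (1 / (r * n)) ^ 2) + r * n * (1 / (r * n)) ^ 2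
      = 1 / √n + 1 / (r * n) := by
        field_simp
        rw [mul_add, mul_left_comm, Real.mul_self_sqrt (Nat.cast_nonneg n), mul_one]
    _ ≤ 1 / √n + 1 / √n := by gcongr
    _ = 2 / √n := by ring

theorem cutNorm_signBlowup_sub_Wrs_le {H : Matrix (Fin n) (Fin n) ℝ} (hH : H.IsHadamard)
    (hsymm : H.IsSymm) :
    cutNorm (fun x y => graphonOfGraph
      ((signBlowup H fun i : Fin r => (i : ℕ) < s).comap finProdFinEquiv.symm) x y -
        Wrs r s x y) ≤ 2 / √n := by
  classical
  let e : Fin r × Fin n ≃ Fin (r * n) := finProdFinEquiv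
  let c : Fin r × Fin n → Fin r × Fin n → ℝ := fun x y =>
    (if x.1 = y.1 then 0 else H x.2 y.2 / 2) - if x = y ∧ (x.1 : ℕ) < s then 1 else 0
  have hentries : ∀ a b, H a b = 1 ∨ H a b = -1 := fun a b =>
    mul_self_eq_one_iff.1 (Unitary.star_mul_self_of_mem (hH.apply_mem a b))
  refine cutNorm_le_of_eq_cell (n := r * n) (c := fun u v => c (e.symm u) (e.symm v))
    (fun x hx y hy => ?_) fun σ τ hσ hτ => ?_
  · rw [graphonOfGraph_eq_cell _ hx hy, Wrs_eq_cell hx hy, ← divNat_cell (r := r) (n := n) hx,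
      ← divNat_cell (r := r) (n := n) hy]
    exact signBlowup_adj_sub_wrsBlock hentries hsymm s (e.symm (cell (r * n) x))
      (e.symm (cell (r * n) y))
  · have hreindex : ∑ u, ∑ v, σ u * τ v * c (e.symm u) (e.symm v) =
        ∑ x, ∑ y, σ (e x) * τ (e y) * c x y :=
      Fintype.sum_equiv e.symm _ _ fun u => Fintype.sum_equiv e.symm _ _ fun v => by
        simp only [Equiv.apply_symm_apply]
    rw [hreindex]
    exact abs_sum_discrepancy_le_of_isHadamard hH _ (fun x => hσ (e x)) fun x => hτ (e x)

theorem Wrs_mem_limitSet {Q : GraphClass}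
    (h : ∀ n, Q.ContainsParts
      fun i : Fin r => if (i : ℕ) < s then ⊤ else (⊥ : SimpleGraph (Fin n))) :
    Wrs r s ∈ limitSet Q := by
  choose H hH hsymm using exists_isHadamard_isSymm
  let G : ∀ k, SimpleGraph (Fin (r * 2 ^ k)) := fun k =>
    (signBlowup (H k) fun i : Fin r => (i : ℕ) < s).comap finProdFinEquiv.symm
  refine ⟨isGraphon_Wrs, fun k => r * 2 ^ k, G, fun k => ?_, ?_, ?_⟩
  · exact h _ _ (signBlowup_comap_mk _ _)
      (SimpleGraph.Embedding.comap finProdFinEquiv.symm.toEmbedding _).isIndContained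
  · refine tendsto_atTop_mono (fun k => ?_) tendsto_id
    exact Nat.lt_two_pow_self.le.trans (Nat.le_mul_of_pos_left _ (NeZero.pos r))
  · refine squeeze_zero (fun k => deltaCut_nonneg _ _) (fun k => (deltaCut_le_dCut _ _).trans
      (cutNorm_signBlowup_sub_Wrs_le (hH k) (hsymm k))) ?_
    have hsqrt : Tendsto (fun k : ℕ => √((2 ^ k : ℕ) : ℝ)) atTop atTop :=
      Real.tendsto_sqrt_atTop.comp (tendsto_natCast_atTop_atTop.comp
        (tendsto_pow_atTop_atTop_of_one_lt one_lt_two))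
    exact hsqrt.const_div_atTop 2

end WrsLimit

section Entropy

theorem binEnt_eq_binEntropy_div (x : ℝ) : binEnt x = Real.binEntropy x / Real.log 2 := by
  rw [binEnt, Real.logb, Real.logb, Real.binEntropy_eq_negMulLog_add_negMulLog_one_sub,
    Real.negMulLog, Real.negMulLog]
  ring

theorem binEnt_zero : binEnt 0 = 0 := by simp [binEnt_eq_binEntropy_div]

theorem binEnt_one : binEnt 1 = 0 := by simp [binEnt_eq_binEntropy_div]

theorem binEnt_one_half : binEnt (1 / 2) = 1 := by
  rw [binEnt_eq_binEntropy_div, one_div, Real.binEntropy_two_inv,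
    div_self (Real.log_pos one_lt_two).ne']

theorem measurable_binEnt : Measurable binEnt := by
  rw [funext binEnt_eq_binEntropy_div]
  exact (Real.binEntropy_continuous.div_const _).measurable

theorem binEnt_mem_Icc {x : ℝ} (hx : x ∈ Icc (0 : ℝ) 1) : binEnt x ∈ Icc (0 : ℝ) 1 := by
  have hlog : 0 < Real.log 2 := Real.log_pos one_lt_two
  rw [binEnt_eq_binEntropy_div]
  exact ⟨div_nonneg (Real.binEntropy_nonneg hx.1 hx.2) hlog.le,
    (div_le_one hlog).2 Real.binEntropy_le_log_two⟩

variable {W : ℝ → ℝ → ℝ}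

theorem IsGraphon.binEnt_comp (hW : IsGraphon W) : IsGraphon fun x y => binEnt (W x y) :=
  ⟨fun x y => by simp only [hW.symm x y], measurable_binEnt.comp hW.measurable,
    fun x y => binEnt_mem_Icc (hW.mem_Icc x y)⟩

theorem isGraphon_randIndicator (hW : IsGraphon W) : IsGraphon (randIndicator W) := by
  refine ⟨fun x y => ?_, ?_, fun x y => ?_⟩
  · simp only [randIndicator, hW.symm x y]
  · exact .ite (hW.measurable measurableSet_Ioo) measurable_const measurable_const
  · rw [randIndicator]
    split_ifs <;> simp

theorem IsGraphon.binEnt_le_randIndicator (hW : IsGraphon W) (x y : ℝ) :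
    binEnt (W x y) ≤ randIndicator W x y := by
  obtain ⟨h0, h1⟩ := hW.mem_Icc x y
  rw [randIndicator]
  split_ifs with h
  · exact (binEnt_mem_Icc ⟨h0, h1⟩).2
  · rcases h0.eq_or_lt with h0 | h0
    · rw [← h0, binEnt_zero]
    · rw [(not_lt.1 fun hlt => h ⟨h0, hlt⟩).antisymm' h1, binEnt_one]

theorem IsGraphon.graphonEnt_le (hW : IsGraphon W) :
    graphonEnt W ≤ ∫ p, randIndicator W p.1 p.2 ∂unitMeasure.prod unitMeasure :=
  (integral_prod _ hW.binEnt_comp.integrable).symm.trans_le <|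
    integral_mono hW.binEnt_comp.integrable (isGraphon_randIndicator hW).integrable
      fun p => hW.binEnt_le_randIndicator p.1 p.2

theorem graphonEnt_Wrs (r s : ℕ) [NeZero r] : graphonEnt (Wrs r s) = 1 - 1 / (r : ℝ) := by
  have hr : (r : ℝ) ≠ 0 := NeZero.ne _
  have hblock : ∀ i j : Fin r, binEnt (wrsBlock s i j) = 1 - if i = j then 1 else 0 :=
    fun i j => by
      rw [wrsBlock]
      split_ifs <;> simp only [binEnt_zero, binEnt_one, binEnt_one_half, sub_self, sub_zero]
  calc graphonEnt (Wrs r s)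
      = ∫ x, ∫ y, binEnt (wrsBlock s (cell r x) (cell r y)) ∂unitMeasure ∂unitMeasure := by
        refine integral_congr_ae (ae_unitMeasure_mem_Ioc.mono fun x hx => ?_)
        refine integral_congr_ae (ae_unitMeasure_mem_Ioc.mono fun y hy => ?_)
        beta_reduce
        rw [Wrs_eq_cell hx hy]
    _ = ∑ i : Fin r, ∑ j : Fin r, 1 / (r : ℝ) * (1 / r) * (1 - if i = j then 1 else 0) := by
        rw [integral_integral_cell _ _ fun i j : Fin r => binEnt (wrsBlock s i j)]
        simp only [unitMeasure_real_preimage_cell, hblock]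
    _ = 1 - 1 / r := by
        simp only [← Finset.mul_sum, Finset.sum_sub_distrib, Finset.sum_ite_eq, Finset.mem_univ,
          if_true, Finset.sum_const, Finset.card_univ, Fintype.card_fin, nsmul_eq_mul, mul_one]
        field_simp

end Entropy

section Turan

open SimpleGraph in
theorem two_mul_card_edgeFinset_le_of_cliqueFree {V : Type*} [Fintype V] {G : SimpleGraph V}
    [DecidableRel G.Adj] {r : ℕ} [NeZero r] (h : G.CliqueFree (r + 1)) :
    2 * (G.edgeFinset.card : ℝ) ≤ (1 - 1 / r) * Fintype.card V ^ 2 := by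
  have hr : (0 : ℝ) < r := by exact_mod_cast NeZero.pos r
  have hnat : 2 * r * G.edgeFinset.card ≤ (r - 1) * Fintype.card V ^ 2 :=
    (Nat.mul_le_mul_left _ (h.card_edgeFinset_le.trans_eq
      card_edgeFinset_turanGraph.symm)).trans mul_card_edgeFinset_turanGraph_le
  have hreal : 2 * r * (G.edgeFinset.card : ℝ) ≤ (r - 1) * Fintype.card V ^ 2 := by
    have h := (Nat.cast_le (α := ℝ)).2 hnat
    push_cast [Nat.cast_pred (NeZero.pos r)] at h
    exact h
  rw [one_sub_div hr.ne', div_mul_eq_mul_div, le_div_iff₀ hr]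
  linarith

variable {W : ℝ → ℝ → ℝ}

theorem IsGraphon.ae_cliqueFree_randSupportGraph (hW : IsGraphon W) {r : ℕ}
    (hK : KFree r (randIndicator W)) (ι : Type*) [Fintype ι] :
    ∀ᵐ x ∂cubeMeasure ι, (randSupportGraph W x).CliqueFree r := by
  have hae : ∀ᵐ x ∂cubeMeasure ι, ∀ f : Fin r ↪ ι, randSupportGraph W (fun i => x (f i)) ≠ ⊤ :=
    ae_all_iff.2 fun f => (measurePreserving_comp_injective f.injective).quasiMeasurePreserving.ae
      (hW.kFree_randIndicator_iff.1 hK)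
  filter_upwards [hae] with x hx
  by_contra hclique
  obtain ⟨f⟩ := (SimpleGraph.not_cliqueFree_iff_top_isContained _).1 hclique
  refine hx ⟨f, f.injective⟩ (hW.randSupportGraph_eq_top_iff.2 fun i j hij => ?_)
  exact (hW.randSupportGraph_adj.1 (f.toHom.map_adj hij)).2

variable {ι : Type*} [Fintype ι]

theorem IsGraphon.sum_offDiag_randIndicator (hW : IsGraphon W) (x : ι → ℝ)
    [DecidableRel (randSupportGraph W x).Adj] :
    ∑ e ∈ Finset.univ.offDiag, randIndicator W (x e.1) (x e.2) =
      2 * (randSupportGraph W x).edgeFinset.card := by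
  classical
  have hadj : ∀ i j, (if i ≠ j then randIndicator W (x i) (x j) else 0) =
      if (randSupportGraph W x).Adj i j then 1 else 0 := fun i j => by
    simp only [hW.randSupportGraph_adj, ite_and, randIndicator, mem_Ioo]
  have hdegree : ∀ i, ((randSupportGraph W x).degree i : ℝ) =
      ∑ j, if (randSupportGraph W x).Adj i j then 1 else 0 := fun i => by
    rw [Finset.sum_boole, ← SimpleGraph.neighborFinset_eq_filter,
      SimpleGraph.card_neighborFinset_eq_degree]
  have hoffDiag : (Finset.univ.offDiag : Finset (ι × ι)) = Finset.univ.filter fun e => e.1 ≠ e.2 :=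
    Finset.ext fun e => by simp
  rw [hoffDiag, Finset.sum_filter, Fintype.sum_prod_type]
  simp only [hadj, ← hdegree]
  exact_mod_cast (randSupportGraph W x).sum_degrees_eq_twice_card_edges

theorem IsGraphon.integral_sum_offDiag (hW : IsGraphon W) :
    ∫ x, ∑ e ∈ Finset.univ.offDiag, W (x e.1) (x e.2) ∂cubeMeasure ι =
      (Fintype.card ι * Fintype.card ι - Fintype.card ι : ℝ) *
        ∫ p, W p.1 p.2 ∂unitMeasure.prod unitMeasure := by
  have hpair : ∀ e ∈ (Finset.univ : Finset ι).offDiag, ∫ x, W (x e.1) (x e.2) ∂cubeMeasure ι =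
      ∫ p, W p.1 p.2 ∂unitMeasure.prod unitMeasure := fun e he => by
    have hmp := measurePreserving_eval_prodMk (ν := unitMeasure) (Finset.mem_offDiag.1 he).2.2
    rw [← hmp.map_eq]
    exact (integral_map hmp.aemeasurable hW.measurable.aestronglyMeasurable).symm
  rw [integral_finsetSum _ fun e _ => hW.integrable_eval e.1 e.2,
    Finset.sum_congr rfl hpair, Finset.sum_const, Finset.offDiag_card,
    nsmul_eq_mul, Finset.card_univ, Nat.cast_sub (Nat.le_mul_self _), Nat.cast_mul]

theorem IsGraphon.integral_randIndicator_le_of_kFree (hW : IsGraphon W) {r : ℕ} [NeZero r]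
    (hK : KFree (r + 1) (randIndicator W)) :
    ∫ p, randIndicator W p.1 p.2 ∂unitMeasure.prod unitMeasure ≤ 1 - 1 / r := by
  classical
  set ρ := ∫ p, randIndicator W p.1 p.2 ∂unitMeasure.prod unitMeasure
  have hsample : ∀ n : ℕ, (n * n - n : ℝ) * ρ ≤ (1 - 1 / r) * n ^ 2 := fun n => by
    have hint : Integrable (fun x : Fin n → ℝ => ∑ e ∈ Finset.univ.offDiag,
        randIndicator W (x e.1) (x e.2)) (cubeMeasure (Fin n)) :=
      integrable_finsetSum _ fun e _ => (isGraphon_randIndicator hW).integrable_eval e.1 e.2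
    have hturan : ∀ᵐ x ∂cubeMeasure (Fin n), ∑ e ∈ Finset.univ.offDiag,
        randIndicator W (x e.1) (x e.2) ≤ (1 - 1 / r) * n ^ 2 := by
      filter_upwards [hW.ae_cliqueFree_randSupportGraph hK (Fin n)] with x hx
      rw [hW.sum_offDiag_randIndicator]
      simpa only [Fintype.card_fin] using two_mul_card_edgeFinset_le_of_cliqueFree hx
    have hmean := integral_mono_ae hint (integrable_const _) hturan
    rwa [(isGraphon_randIndicator hW).integral_sum_offDiag, Fintype.card_fin, integral_const,
      probReal_univ, one_smul] at hmean
  have hlim : Tendsto (fun n : ℕ => (1 - 1 / (n : ℝ)) * ρ) atTop (nhds ρ) := by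
    simpa only [sub_zero, one_mul] using
      ((tendsto_const_nhds (x := (1 : ℝ))).sub tendsto_one_div_atTop_nhds_zero_nat).mul_const ρ
  refine le_of_tendsto hlim ((eventually_gt_atTop 0).mono fun n hn => ?_)
  have hn : (0 : ℝ) < n := by exact_mod_cast hn
  refine le_of_mul_le_mul_right ?_ (pow_pos hn 2)
  calc (1 - 1 / n) * ρ * n ^ 2 = (n * n - n) * ρ := by field_simp
    _ ≤ (1 - 1 / r) * n ^ 2 := hsample n

theorem not_kFree_randIndicator_Wrs {t : ℕ} [NeZero t] (u : ℕ) {r : ℕ} (h : r ≤ t) :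
    ¬ KFree r (randIndicator (Wrs t u)) := by
  rw [isGraphon_Wrs.kFree_randIndicator_iff]
  intro hK
  let B : Fin r → Set ℝ := fun i => cell t ⁻¹' {Fin.castLE h i}
  have hnull : cubeMeasure (Fin r) (univ.pi B) = 0 := by
    rw [← compl_mem_ae_iff]
    filter_upwards [hK, ae_cubeMeasure_mem_Ioc (Fin r)] with x hx hx01 hxB
    refine hx (isGraphon_Wrs.randSupportGraph_eq_top_iff.2 fun i j hij => ?_)
    have hcell : ∀ i, cell t (x i) = Fin.castLE h i := fun i => hxB i (mem_univ i)
    rw [Wrs_eq_cell (hx01 i) (hx01 j), hcell, hcell, wrsBlock,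
      if_neg ((Fin.castLE_injective h).ne hij)]
    norm_num
  rw [Measure.pi_pi, Finset.prod_eq_zero_iff] at hnull
  obtain ⟨i, -, hi⟩ := hnull
  have ht : (t : ℝ) ≠ 0 := NeZero.ne _
  have hpos := unitMeasure_real_preimage_cell (Fin.castLE h i)
  rw [measureReal_def, hi, ENNReal.toReal_zero] at hpos
  exact one_div_ne_zero ht hpos.symm

end Turan

/-- part of Theorem 1.6, characterisations (1.9), (1.10) of the colouring
number: if every `W ∈ Q̂` has `K_{r+1}`-free randomness support graphon while some
`W₀ ∈ Q̂` has randomness support graphon that is not `K_r`-free, then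
`sup_{W ∈ Q̂} Ent(W) = 1 - 1/r`, `W^{(r,s)} ∈ Q̂` for some `s ≤ r`, and `W^{(t,u)} ∉ Q̂`
for all `t > r`. -/
theorem stmt17 (Q : GraphClass) (hQ : IsHereditary Q) (hne : (limitSet Q).Nonempty)
    (r : ℕ) (hr : 1 ≤ r)
    (hall : ∀ W ∈ limitSet Q, KFree (r + 1) (randIndicator W))
    (hex : ∃ W₀ ∈ limitSet Q, ¬ KFree r (randIndicator W₀)) :
    sSup (graphonEnt '' limitSet Q) = 1 - 1 / (r : ℝ) ∧
      (∃ s : ℕ, s ≤ r ∧ Wrs r s ∈ limitSet Q) ∧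
      ∀ t u : ℕ, r < t → u ≤ t → Wrs t u ∉ limitSet Q := by
  obtain ⟨W₀, hW₀, hK⟩ := hex
  have : NeZero r := ⟨by omega⟩
  obtain ⟨s, hs, hparts⟩ := GraphClass.exists_forall_containsParts_val_lt fun m =>
    hQ.exists_containsParts hW₀ hK (Fin m)
  have hmem : Wrs r s ∈ limitSet Q := Wrs_mem_limitSet hparts
  refine ⟨IsGreatest.csSup_eq ⟨⟨_, hmem, graphonEnt_Wrs r s⟩, ?_⟩, ⟨s, hs, hmem⟩,
    fun t u ht _ hc => ?_⟩
  · rintro _ ⟨W, hW, rfl⟩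
    exact hW.1.graphonEnt_le.trans (hW.1.integral_randIndicator_le_of_kFree (hall W hW))
  · have : NeZero t := ⟨by omega⟩
    exact not_kFree_randIndicator_Wrs u ht (hall _ hc)

end
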